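/- arXiv:1507.07186 — 6 statements merged into one kernel-verified Lean document; each statement's English description precedes it below -/
import Mathlib

section
/- Let A be a C*-algebra and let F be a JB*-subtriple of A which is a Chebyshev subspace of A. If a ∈ F is not Brown–Pedersen quasi-invertible in F, then the norm closure of the set {a x* a : x ∈ A} is contained in F. -/
section Helpers

variable {A : Type*} [NonUnitalCStarAlgebra A]

/-- Orthogonal elements: norm bound of the difference. -/
lemma aux_norm_sub_le {w v : A} {d : ℝ} (hd : 0 ≤ d) (h1 : w * star v = 0)
    (h2 : star w * v = 0) (hw : ‖w‖ ≤ d) (hv : ‖v‖ ≤ d) : ‖w - v‖ ≤ d := by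
  have h3 : star v * w = 0 := by
    have := congrArg star h2
    simpa using this
  have e : star (w - v) * (w - v) = star w * w + star v * v := by
    simp only [star_sub, sub_mul, mul_sub, h2, h3]
    abel
  have hn : ‖w - v‖ * ‖w - v‖ = max (‖w‖ * ‖w‖) (‖v‖ * ‖v‖) := by
    rw [← CStarRing.norm_star_mul_self, e,
      (IsSelfAdjoint.star_mul_self w).norm_add_eq_max (IsSelfAdjoint.star_mul_self v),
      CStarRing.norm_star_mul_self, CStarRing.norm_star_mul_self]
    rw [mul_assoc, ← mul_assoc w, h1]
    simp
  have hm : ‖w - v‖ * ‖w - v‖ ≤ d * d := by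
    rw [hn]
    exact max_le (mul_self_le_mul_self (norm_nonneg _) hw)
      (mul_self_le_mul_self (norm_nonneg _) hv)
  exact abs_le_of_sq_le_sq' (by nlinarith) hd |>.2

variable (F : Submodule ℂ A)

lemma aux_Q (hFtriple : ∀ x ∈ F, ∀ y ∈ F, ∀ z ∈ F,
      (2 : ℂ)⁻¹ • (x * star y * z + z * star y * x) ∈ F) {x y : A} (hx : x ∈ F) (hy : y ∈ F) :
    x * star y * x ∈ F := by
  have := hFtriple x hx y hy x hx
  rwa [← two_smul ℂ (x * star y * x), smul_smul, inv_mul_cancel₀ two_ne_zero, one_smul] at this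

lemma aux_D (hFtriple : ∀ x ∈ F, ∀ y ∈ F, ∀ z ∈ F,
      (2 : ℂ)⁻¹ • (x * star y * z + z * star y * x) ∈ F) {x y z : A} (hx : x ∈ F) (hy : y ∈ F)
    (hz : z ∈ F) :
    x * star y * z + z * star y * x ∈ F := by
  have := F.smul_mem (2 : ℂ) (hFtriple x hx y hy z hz)
  rwa [smul_smul, mul_inv_cancel₀ two_ne_zero, one_smul] at this

/-- Algebraic core of the argument. -/
lemma aux_core
    (hFtriple : ∀ x ∈ F, ∀ y ∈ F, ∀ z ∈ F,
      (2 : ℂ)⁻¹ • (x * star y * z + z * star y * x) ∈ F)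
    (hCheb : ∀ x : A, ∃! v : A, v ∈ F ∧ ‖x - v‖ = Metric.infDist x (F : Set A))
    (a : A) (ha : a ∈ F)
    (hBP : ¬ ∃ y ∈ F, ∀ z ∈ F,
      z - a * star y * z - z * star y * a + a * star y * z * star y * a = 0)
    (y b e : A) (hy : y ∈ F) (hb : b ∈ F) (hbn : ‖b‖ ≤ 1)
    (h1 : y * star a * b = b) (h2 : b * star a * y = b)
    (h3 : b * star b * e = e) (h4 : e * star b * b = e) (u : A) :
    e * star u * e ∈ F := by
  push Not at hBP
  obtain ⟨z, hz, hv0⟩ := hBP y hy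
  set v := z - a * star y * z - z * star y * a + a * star y * z * star y * a with hv
  have h1' : star b * a * star y = star b := by
    simpa [mul_assoc] using congrArg star h1
  have h2' : star y * a * star b = star b := by
    simpa [mul_assoc] using congrArg star h2
  have hvF : v ∈ F := by
    have q1 := aux_D F hFtriple ha hy hz
    have q2 := aux_Q F hFtriple ha (aux_Q F hFtriple hy hz)
    have q3 := F.add_mem (F.sub_mem hz q1) q2
    convert q3 using 1
    simp only [hv, star_mul, star_star, mul_assoc]
    abel
  have hbv : star b * v = 0 := by
    have : star b * v = star b * z - (star b * a * star y) * z - star b * z * star y * a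
        + (star b * a * star y) * z * star y * a := by
      simp only [hv, mul_assoc, mul_add, mul_sub]
    rw [this, h1']
    simp
  have hvb : v * star b = 0 := by
    have : v * star b = z * star b - a * star y * z * star b - z * (star y * a * star b)
        + a * star y * z * (star y * a * star b) := by
      simp only [hv, mul_assoc, add_mul, sub_mul]
    rw [this, h2']
    simp
  have hbv' : b * star v = 0 := by simpa using congrArg star hvb
  set x := e * star u * e with hx
  obtain ⟨c, ⟨hcF, hcd⟩, huniq⟩ := hCheb x
  set d := Metric.infDist x (F : Set A) with hd
  have hd0 : 0 ≤ d := Metric.infDist_nonneg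
  have key : ∀ c' ∈ F, ‖x - c'‖ ≤ d → c' = c := by
    intro c' hc' hle
    refine huniq c' ⟨hc', le_antisymm hle ?_⟩
    rw [← dist_eq_norm]
    exact Metric.infDist_le_dist_of_mem hc'
  have hxL : b * star b * x * star b * b = x := by
    have : b * star b * x * star b * b = (b * star b * e) * star u * (e * star b * b) := by
      simp only [hx, mul_assoc]
    rw [this, h3, h4]
  have hLn : ∀ w : A, ‖b * star b * w * star b * b‖ ≤ ‖w‖ := by
    intro w
    have hbn' : ‖star b‖ ≤ 1 := by rwa [norm_star]
    have l : ∀ p q : A, ‖p‖ ≤ 1 → ‖p * q‖ ≤ ‖q‖ := fun p q hp =>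
      (norm_mul_le p q).trans (mul_le_of_le_one_left (norm_nonneg _) hp)
    have r : ∀ p q : A, ‖p‖ ≤ 1 → ‖q * p‖ ≤ ‖q‖ := fun p q hp =>
      (norm_mul_le q p).trans (mul_le_of_le_one_right (norm_nonneg _) hp)
    refine (r _ _ hbn).trans ((r _ _ hbn').trans ?_)
    rw [mul_assoc]
    exact (l _ _ hbn).trans (l _ _ hbn')
  have hcL : b * star b * c * star b * b = c := by
    apply key
    · have := aux_Q F hFtriple hb (aux_Q F hFtriple hb hcF)
      simpa [mul_assoc] using this
    · rw [← hcd]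
      have := hLn (x - c)
      rwa [mul_sub, sub_mul, sub_mul, hxL] at this
  set w := x - c with hw
  have hwL : b * star b * w * star b * b = w := by
    rw [hw, mul_sub, sub_mul, sub_mul, hxL, hcL]
  have hwv : w * star v = 0 := by
    rw [← hwL, mul_assoc, hbv', mul_zero]
  have hwv' : star w * v = 0 := by
    rw [← hwL]
    simp only [star_mul, star_star, mul_assoc, hbv, mul_zero]
  have hdz : d = 0 := by
    by_contra hne
    have hdpos : 0 < d := lt_of_le_of_ne hd0 (Ne.symm hne)
    have hvn : 0 < ‖v‖ := norm_pos_iff.mpr hv0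
    set s : ℂ := ((d / ‖v‖ : ℝ) : ℂ) with hs
    have hs0 : s ≠ 0 := by
      rw [hs]
      exact_mod_cast (div_pos hdpos hvn).ne'
    have hsn : ‖s • v‖ ≤ d := by
      rw [norm_smul, hs, Complex.norm_real, Real.norm_of_nonneg (by positivity),
        div_mul_cancel₀ _ hvn.ne']
    have hle : ‖w - s • v‖ ≤ d := by
      apply aux_norm_sub_le hd0 _ _ hcd.le hsn
      · rw [star_smul, mul_smul_comm, hwv, smul_zero]
      · rw [mul_smul_comm, hwv', smul_zero]
    have := key (c + s • v) (F.add_mem hcF (F.smul_mem s hvF)) (by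
      rwa [hw, sub_sub] at hle)
    have : s • v = 0 := by simpa using this
    rcases smul_eq_zero.mp this with h | h
    · exact hs0 h
    · exact hv0 h
  have : x = c := by
    rw [hdz] at hcd
    exact sub_eq_zero.mp (norm_eq_zero.mp hcd)
  rw [this]
  exact hcF

/-- Odd functional calculus stays in `F`. -/
lemma aux_odd (hFclosed : IsClosed (F : Set A))
    (hFtriple : ∀ x ∈ F, ∀ y ∈ F, ∀ z ∈ F,
      (2 : ℂ)⁻¹ • (x * star y * z + z * star y * x) ∈ F)
    (a : A) (ha : a ∈ F) (f : ℝ → ℝ) : a * cfcₙ f (star a * a) ∈ F := by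
  have key : ∀ b ∈ NonUnitalStarAlgebra.adjoin ℝ {star a * a},
      ∀ w ∈ F, w * (star a * a) = a * star a * w →
        w * b ∈ F ∧ w * b * (star a * a) = a * star a * (w * b) := by
    intro b hb
    change b ∈ NonUnitalAlgebra.adjoin ℝ ({star a * a} ∪ star {star a * a}) at hb
    induction hb using NonUnitalAlgebra.adjoin_induction with
    | mem x hx =>
      have hx' : x = star a * a := by
        rcases hx with hx | hx
        · exact hx
        · have h1 : star x = star a * a := hx
          simpa using congrArg star h1
      subst hx'
      intro w hw hc
      refine ⟨?_, ?_⟩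
      · have := hFtriple a ha a ha w hw
        rw [← hc, mul_assoc w, ← two_smul ℂ, smul_smul, inv_mul_cancel₀ two_ne_zero,
          one_smul] at this
        exact this
      · rw [hc, mul_assoc (a * star a), hc]
    | add x y _ _ hx hy =>
      intro w hw hc
      obtain ⟨p1, p2⟩ := hx w hw hc
      obtain ⟨q1, q2⟩ := hy w hw hc
      refine ⟨?_, ?_⟩
      · rw [mul_add]
        exact F.add_mem p1 q1
      · rw [mul_add, add_mul, p2, q2, mul_add]
    | zero =>
      intro w hw hc
      simp
    | mul x y _ _ hx hy =>
      intro w hw hc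
      obtain ⟨p1, p2⟩ := hx w hw hc
      rw [← mul_assoc w]
      exact hy _ p1 p2
    | smul r x _ hx =>
      intro w hw hc
      obtain ⟨p1, p2⟩ := hx w hw hc
      refine ⟨?_, ?_⟩
      · rw [mul_smul_comm]
        exact F.smul_mem (r : ℂ) p1
      · rw [mul_smul_comm, smul_mul_assoc, p2, mul_smul_comm]
  have hmem : cfcₙ f (star a * a) ∈ NonUnitalStarAlgebra.elemental ℝ (star a * a) :=
    cfcₙ_mem_elemental f _
  have hcl : cfcₙ f (star a * a) ∈
      closure (NonUnitalStarAlgebra.adjoin ℝ {star a * a} : Set A) := hmem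
  have hpre : IsClosed {b : A | a * b ∈ F} :=
    hFclosed.preimage (continuous_const.mul continuous_id)
  exact closure_minimal (fun b hb => (key b hb a ha (by rw [mul_assoc])).1) hpre hcl

/-- Cut-off version of the theorem together with the approximation bound. -/
lemma aux_delta (hFclosed : IsClosed (F : Set A))
    (hFtriple : ∀ x ∈ F, ∀ y ∈ F, ∀ z ∈ F,
      (2 : ℂ)⁻¹ • (x * star y * z + z * star y * x) ∈ F)
    (hCheb : ∀ x : A, ∃! v : A, v ∈ F ∧ ‖x - v‖ = Metric.infDist x (F : Set A))
    (a : A) (ha : a ∈ F)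
    (hBP : ¬ ∃ y ∈ F, ∀ z ∈ F,
      z - a * star y * z - z * star y * a + a * star y * z * star y * a = 0)
    (δ : ℝ) (hδ : 0 < δ) :
    ∃ e : A, (∀ u : A, e * star u * e ∈ F) ∧ ‖a - e‖ * ‖a - e‖ ≤ 3 * δ := by
  have hsp : ∀ t ∈ quasispectrum ℝ (star a * a), 0 ≤ t := by
    let _ := CStarAlgebra.spectralOrder A
    let _ := CStarAlgebra.spectralOrderedRing A
    exact quasispectrum_nonneg_of_nonneg _ (star_mul_self_nonneg a)
  have hsa : IsSelfAdjoint (star a * a) := IsSelfAdjoint.star_mul_self a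
  have hodd := aux_odd F hFclosed hFtriple a ha
  set h := star a * a with hh
  clear_value h
  have hmax : ∀ t : ℝ, 0 < max t δ := fun t => lt_max_of_lt_right hδ
  let μ : ℝ → ℝ := fun t => t / (max t δ) ^ 2
  let κ : ℝ → ℝ := fun t => min 1 (max 0 ((t - δ) / δ)) / √(max t δ)
  let φ : ℝ → ℝ := fun t => min 1 (max 0 ((t - 2 * δ) / δ))
  have μc : Continuous μ := by
    refine Continuous.div (by fun_prop) (by fun_prop) fun t => ?_
    have := hmax t
    positivity
  have κc : Continuous κ := by
    refine Continuous.div (by fun_prop) (by fun_prop) fun t => ?_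
    exact (Real.sqrt_pos.mpr (hmax t)).ne'
  have φc : Continuous φ := by fun_prop
  have μ0 : μ 0 = 0 := by simp [μ]
  have κ0 : κ 0 = 0 := by
    have : (0 - δ) / δ ≤ 0 := by
      rw [div_le_iff₀ hδ]; linarith
    simp only [κ, max_eq_left this]
    simp
  have φ0 : φ 0 = 0 := by
    have : (0 - 2 * δ) / δ ≤ 0 := by
      rw [div_le_iff₀ hδ]; linarith
    simp only [φ, max_eq_left this]
    simp
  have i1 : ∀ t : ℝ, t * (μ t * κ t) = κ t := by
    intro t
    rcases le_total t δ with ht | ht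
    · have : (t - δ) / δ ≤ 0 := by
        rw [div_le_iff₀ hδ]; linarith
      have hk : κ t = 0 := by
        simp only [κ, max_eq_left this]
        simp
      simp [hk]
    · have htp : t ≠ 0 := (lt_of_lt_of_le hδ ht).ne'
      have : t * μ t = 1 := by
        simp only [μ, max_eq_left ht]
        field_simp
      rw [← mul_assoc, this, one_mul]
  have κsq : ∀ t : ℝ, κ t * κ t = (min 1 (max 0 ((t - δ) / δ))) ^ 2 / max t δ := by
    intro t
    simp only [κ]
    rw [div_mul_div_comm, Real.mul_self_sqrt (hmax t).le, sq]
  have i2 : ∀ t : ℝ, t * (κ t * κ t) * φ t = φ t := by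
    intro t
    rcases le_total t (2 * δ) with ht | ht
    · have : (t - 2 * δ) / δ ≤ 0 := by
        rw [div_le_iff₀ hδ]; linarith
      have hk : φ t = 0 := by
        simp only [φ, max_eq_left this]
        simp
      simp [hk]
    · have htp : t ≠ 0 := (lt_of_lt_of_le (by linarith) ht).ne'
      have h1 : 1 ≤ (t - δ) / δ := by
        rw [le_div_iff₀ hδ]; linarith
      have : t * (κ t * κ t) = 1 := by
        rw [κsq, max_eq_left (by linarith : δ ≤ t), max_eq_right (by linarith), min_eq_left h1]
        field_simp
      rw [this, one_mul]
  have i3 : ∀ t : ℝ, 0 ≤ t → |t * (κ t * κ t)| ≤ 1 := by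
    intro t ht
    have hm0 : 0 ≤ min 1 (max 0 ((t - δ) / δ)) := le_min zero_le_one (le_max_left _ _)
    have hm1 : min 1 (max 0 ((t - δ) / δ)) ≤ 1 := min_le_left _ _
    rw [abs_of_nonneg (mul_nonneg ht (mul_self_nonneg _)), κsq, ← mul_div_assoc,
      div_le_one (hmax t)]
    have : (min 1 (max 0 ((t - δ) / δ))) ^ 2 ≤ 1 := pow_le_one₀ hm0 hm1
    calc t * (min 1 (max 0 ((t - δ) / δ))) ^ 2 ≤ t * 1 := by gcongr
      _ ≤ max t δ := by simp
  have i4 : ∀ t : ℝ, 0 ≤ t → |t - t * φ t - t * φ t + t * (φ t * φ t)| ≤ 3 * δ := by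
    intro t ht
    have e : t - t * φ t - t * φ t + t * (φ t * φ t) = t * (1 - φ t) ^ 2 := by ring
    have hm0 : 0 ≤ φ t := le_min zero_le_one (le_max_left _ _)
    have hm1 : φ t ≤ 1 := min_le_left _ _
    rw [e, abs_of_nonneg (by positivity)]
    rcases le_total t (3 * δ) with h3 | h3
    · have : (1 - φ t) ^ 2 ≤ 1 := pow_le_one₀ (by linarith) (by linarith)
      calc t * (1 - φ t) ^ 2 ≤ t * 1 := by gcongr
        _ ≤ 3 * δ := by linarith
    · have h1 : 1 ≤ (t - 2 * δ) / δ := by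
        rw [le_div_iff₀ hδ]; linarith
      have : φ t = 1 := by
        simp only [φ]
        rw [max_eq_right (by linarith), min_eq_left h1]
      rw [this]
      simp only [sub_self]
      nlinarith
  set M := cfcₙ μ h with hM
  set K := cfcₙ κ h with hK
  set P := cfcₙ φ h with hP
  have hid : cfcₙ (fun t : ℝ => t) h = h := cfcₙ_id' ℝ h
  have cMK : M * K = K * M := cfcₙ_commute_cfcₙ μ κ h
  have chM : h * M = M * h := by
    have := cfcₙ_commute_cfcₙ (fun t : ℝ => t) μ h
    rwa [hid] at this
  have chK : h * K = K * h := by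
    have := cfcₙ_commute_cfcₙ (fun t : ℝ => t) κ h
    rwa [hid] at this
  have chP : h * P = P * h := by
    have := cfcₙ_commute_cfcₙ (fun t : ℝ => t) φ h
    rwa [hid] at this
  have cKP : K * P = P * K := cfcₙ_commute_cfcₙ κ φ h
  have sM : star M = M := cfcₙ_predicate (R := ℝ) (p := IsSelfAdjoint) μ h
  have sK : star K = K := cfcₙ_predicate (R := ℝ) (p := IsSelfAdjoint) κ h
  have sP : star P = P := cfcₙ_predicate (R := ℝ) (p := IsSelfAdjoint) φ h
  have E1 : h * (M * K) = K := by
    have : cfcₙ (fun t => t * (μ t * κ t)) h = h * (M * K) := by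
      rw [cfcₙ_mul (fun t => t) (fun t => μ t * κ t) h (by fun_prop) rfl (by fun_prop)
        (by simp [μ0]), cfcₙ_mul μ κ h (by fun_prop) μ0 (by fun_prop) κ0, hid]
    rw [← this]
    simp only [i1]
    rfl
  have E2' : cfcₙ (fun t => t * (κ t * κ t)) h = h * (K * K) := by
    rw [cfcₙ_mul (fun t => t) (fun t => κ t * κ t) h (by fun_prop) rfl (by fun_prop)
      (by simp [κ0]), cfcₙ_mul κ κ h (by fun_prop) κ0 (by fun_prop) κ0, hid]
  have E2 : h * (K * K) * P = P := by
    have : cfcₙ (fun t => t * (κ t * κ t) * φ t) h = h * (K * K) * P := by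
      rw [cfcₙ_mul (fun t => t * (κ t * κ t)) φ h (by fun_prop) (by simp) (by fun_prop)
        φ0, E2']
    rw [← this]
    simp only [i2]
    rfl
  have E3 : ‖h * (K * K)‖ ≤ 1 := by
    rw [← E2']
    exact norm_cfcₙ_le fun t ht => i3 t (hsp t ht)
  have E4 : ‖h - h * P - h * P + h * (P * P)‖ ≤ 3 * δ := by
    have : cfcₙ (fun t => t - t * φ t - t * φ t + t * (φ t * φ t)) h
        = h - h * P - h * P + h * (P * P) := by
      rw [cfcₙ_add (fun t => t - t * φ t - t * φ t) (fun t => t * (φ t * φ t)) h (by fun_prop)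
        (by simp) (by fun_prop) (by simp),
        cfcₙ_sub (fun t => t - t * φ t) (fun t => t * φ t) h (by fun_prop)
        (by simp) (by fun_prop) (by simp),
        cfcₙ_sub (fun t => t) (fun t => t * φ t) h (by fun_prop)
        (by simp) (by fun_prop) (by simp),
        cfcₙ_mul (fun t => t) φ h (by fun_prop) rfl (by fun_prop) φ0,
        cfcₙ_mul (fun t => t) (fun t => φ t * φ t) h (by fun_prop) rfl (by fun_prop)
        (by simp [φ0]), cfcₙ_mul φ φ h (by fun_prop) φ0 (by fun_prop) φ0, hid]
    rw [← this]
    exact norm_cfcₙ_le fun t ht => i4 t (hsp t ht)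
  refine ⟨a * P, fun u => ?_, ?_⟩
  · refine aux_core F hFtriple hCheb a ha hBP (a * M) (a * K) (a * P)
      (hodd μ) (hodd κ) ?_ ?_ ?_ ?_ ?_ u
    · have : ‖a * K‖ * ‖a * K‖ ≤ 1 := by
        rw [← CStarRing.norm_star_mul_self]
        have e : star (a * K) * (a * K) = h * (K * K) := by
          rw [star_mul, sK, mul_assoc, ← mul_assoc (star a), ← hh, chK, ← mul_assoc, ← mul_assoc,
            chK, mul_assoc, mul_assoc, chK]
        rw [e]
        exact E3
      nlinarith [norm_nonneg (a * K)]
    · calc a * M * star a * (a * K) = a * (M * h * K) := by simp only [hh, mul_assoc]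
        _ = a * K := by rw [← chM, mul_assoc, E1]
    · calc a * K * star a * (a * M) = a * (K * h * M) := by simp only [hh, mul_assoc]
        _ = a * K := by rw [← chK, mul_assoc, ← cMK, E1]
    · calc a * K * star (a * K) * (a * P) = a * (K * K * h * P) := by
            simp only [hh, mul_assoc, star_mul, sK]
        _ = a * P := by
            rw [mul_assoc K, ← chK, ← mul_assoc K, ← chK, mul_assoc h, E2]
    · calc a * P * star (a * K) * (a * K) = a * (P * (K * (h * K))) := by
            simp only [hh, mul_assoc, star_mul, sK]
        _ = a * (h * (K * K) * P) := by
            congr 1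
            rw [chK, ← mul_assoc K, ← mul_assoc P, ← mul_assoc P, ← cKP, mul_assoc K P K, ← cKP,
              ← mul_assoc, mul_assoc (K * K), ← chP, ← mul_assoc, mul_assoc K, ← chK,
              ← mul_assoc, ← chK, mul_assoc h]
        _ = a * P := by rw [E2]
  · rw [← CStarRing.norm_star_mul_self]
    have e : star (a - a * P) * (a - a * P) = h - h * P - h * P + h * (P * P) := by
      have e1 : star (a - a * P) * (a - a * P) = h - h * P - P * h + P * h * P := by
        simp only [star_sub, star_mul, sP, sub_mul, mul_sub, hh, mul_assoc]
        abel
      rw [e1, ← chP, mul_assoc]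
    rw [e]
    exact E4

lemma aux_main (hFclosed : IsClosed (F : Set A))
    (hFtriple : ∀ x ∈ F, ∀ y ∈ F, ∀ z ∈ F,
      (2 : ℂ)⁻¹ • (x * star y * z + z * star y * x) ∈ F)
    (hCheb : ∀ x : A, ∃! v : A, v ∈ F ∧ ‖x - v‖ = Metric.infDist x (F : Set A))
    (a : A) (ha : a ∈ F)
    (hBP : ¬ ∃ y ∈ F, ∀ z ∈ F,
      z - a * star y * z - z * star y * a + a * star y * z * star y * a = 0) :
    closure {w : A | ∃ x : A, w = a * star x * a} ⊆ (F : Set A) := by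
  refine closure_minimal ?_ hFclosed
  rintro _ ⟨u, rfl⟩
  have hc : Continuous fun e : A => e * star u * e := by fun_prop
  have hcl : IsClosed {e : A | e * star u * e ∈ F} := hFclosed.preimage hc
  suffices a ∈ closure {e : A | e * star u * e ∈ F} by
    rw [hcl.closure_eq] at this
    exact this
  rw [Metric.mem_closure_iff]
  intro ε hε
  obtain ⟨e, he, hn⟩ := aux_delta F hFclosed hFtriple hCheb a ha hBP (ε ^ 2 / 6) (by positivity)
  refine ⟨e, he u, ?_⟩
  rw [dist_eq_norm]
  nlinarith [norm_nonneg (a - e)]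

end Helpers


/-- Let `A` be a C*-algebra and `F` a JB*-subtriple of `A` which is a
Chebyshev subspace of `A`. If `a ∈ F` is not Brown–Pedersen quasi-invertible in `F`,
then the norm closure of `{a x* a : x ∈ A}` is contained in `F`. -/
theorem closure_Q_subset_of_not_BP_quasi_invertible
    {A : Type*} [NonUnitalNormedRing A] [StarRing A] [CStarRing A]
    [NormedSpace ℂ A] [IsScalarTower ℂ A A] [SMulCommClass ℂ A A]
    [StarModule ℂ A] [CompleteSpace A]
    (F : Submodule ℂ A) (hFclosed : IsClosed (F : Set A))
    (hFtriple : ∀ x ∈ F, ∀ y ∈ F, ∀ z ∈ F,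
      (2 : ℂ)⁻¹ • (x * star y * z + z * star y * x) ∈ F)
    (hCheb : ∀ x : A, ∃! v : A, v ∈ F ∧ ‖x - v‖ = Metric.infDist x (F : Set A))
    (a : A) (ha : a ∈ F)
    (hBP : ¬ ∃ y ∈ F, ∀ z ∈ F,
      z - a * star y * z - z * star y * a + a * star y * z * star y * a = 0) :
    closure {w : A | ∃ x : A, w = a * star x * a} ⊆ (F : Set A) := by
  let _ : NonUnitalCStarAlgebra A := { }
  exact aux_main F hFclosed hFtriple hCheb a ha hBP
end

section
/- Let A be a C*-algebra and let F be a JB*-subtriple of A which is a Chebyshev subspace of A. If a ∈ F is not Brown–Pedersen quasi-invertible in F, then the norm closure of {a x* a : x ∈ A} equals the norm closure of {a x* a : x ∈ F}; that is, the closed inner ideal of A generated by a coincides with the closed inner ideal of F generated by a. -/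
namespace ChebTriple

variable {A : Type*} [NonUnitalCStarAlgebra A]

/-- Orthogonal elements satisfy the max-norm inequality. -/
theorem norm_sub_le_of_orth {d z : A} (h1 : d * star z = 0) (h2 : star d * z = 0)
    (hz : ‖z‖ ≤ ‖d‖) : ‖d - z‖ ≤ ‖d‖ := by
  have h3 : star z * d = 0 := by simpa using congrArg star h2
  have e : star (d - z) * (d - z) = star d * d + star z * z := by
    simp only [star_sub, sub_mul, mul_sub, h2, h3]
    abel
  have hs1 : IsSelfAdjoint (star d * d) := IsSelfAdjoint.star_mul_self d
  have hs2 : IsSelfAdjoint (star z * z) := IsSelfAdjoint.star_mul_self z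
  have o1 : star d * d * (star z * z) = 0 := by
    rw [mul_assoc, ← mul_assoc d, h1]; simp
  have o2 : star z * z * (star d * d) = 0 := by
    have h4 : z * star d = 0 := by simpa using congrArg star h1
    rw [mul_assoc, ← mul_assoc z, h4]; simp
  have hmax := IsSelfAdjoint.norm_add_eq_max hs1 hs2 o1
  rw [← e] at hmax
  simp only [CStarRing.norm_star_mul_self] at hmax
  have : ‖d - z‖ * ‖d - z‖ ≤ ‖d‖ * ‖d‖ := by
    rw [hmax]
    exact max_le le_rfl (mul_self_le_mul_self (norm_nonneg _) hz)
  exact nonneg_le_nonneg_of_sq_le_sq (norm_nonneg _) this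

/-- Odd functional calculus stays in the subtriple. -/
theorem mul_cfc_mem (F : Submodule ℂ A) (hFclosed : IsClosed (F : Set A))
    (hFtriple : ∀ x ∈ F, ∀ y ∈ F, ∀ z ∈ F,
      (2 : ℂ)⁻¹ • (x * star y * z + z * star y * x) ∈ F)
    (a : A) (ha : a ∈ F) (f : ℝ → ℝ) : a * cfcₙ f (star a * a) ∈ F := by
  have hb : star (star a * a) = star a * a := by simp
  have key : ∀ v, Commute v (star a * a) → a * v ∈ F → a * v * (star a * a) ∈ F := by
    intro v hv hav
    have := hFtriple _ hav a ha a ha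
    have e : a * star a * (a * v) = a * v * (star a * a) := by
      rw [mul_assoc a v, hv.eq]; simp only [mul_assoc]
    rw [e, ← mul_assoc (a * v), ← two_smul ℂ, smul_smul] at this
    simpa [mul_assoc] using this
  have key0 : a * (star a * a) ∈ F := by
    have := hFtriple a ha a ha a ha
    rw [← two_smul ℂ, smul_smul] at this
    simpa [mul_assoc] using this
  let S : NonUnitalStarSubalgebra ℂ A :=
    { carrier := {u | Commute u (star a * a) ∧ a * u ∈ F ∧ a * star u ∈ F ∧
        ∀ v, Commute v (star a * a) → a * v ∈ F → a * v * u ∈ F ∧ a * v * star u ∈ F}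
      add_mem' := by
        rintro x y ⟨h1, h2, h3, h4⟩ ⟨k1, k2, k3, k4⟩
        refine ⟨h1.add_left k1, ?_, ?_, fun v hv hav => ⟨?_, ?_⟩⟩
        · rw [mul_add]; exact F.add_mem h2 k2
        · rw [star_add, mul_add]; exact F.add_mem h3 k3
        · rw [mul_add]; exact F.add_mem (h4 v hv hav).1 (k4 v hv hav).1
        · rw [star_add, mul_add]; exact F.add_mem (h4 v hv hav).2 (k4 v hv hav).2
      zero_mem' := by simp
      mul_mem' := by
        rintro x y ⟨h1, h2, h3, h4⟩ ⟨k1, k2, k3, k4⟩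
        have k1' : Commute (star y) (star a * a) := by
          have := k1.star_star; rwa [hb] at this
        refine ⟨h1.mul_left k1, ?_, ?_, fun v hv hav => ⟨?_, ?_⟩⟩
        · rw [← mul_assoc]; exact (k4 x h1 h2).1
        · rw [star_mul, ← mul_assoc]; exact (h4 _ k1' k3).2
        · have := (k4 (v * x) (hv.mul_left h1) (by rw [← mul_assoc]; exact (h4 v hv hav).1)).1
          simpa [mul_assoc] using this
        · have := (h4 (v * star y) (hv.mul_left k1')
            (by rw [← mul_assoc]; exact (k4 v hv hav).2)).2
          simpa [mul_assoc] using this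
      smul_mem' := by
        rintro c x ⟨h1, h2, h3, h4⟩
        refine ⟨h1.smul_left c, ?_, ?_, fun v hv hav => ⟨?_, ?_⟩⟩
        · rw [mul_smul_comm]; exact F.smul_mem _ h2
        · rw [star_smul, mul_smul_comm]; exact F.smul_mem _ h3
        · rw [mul_smul_comm]; exact F.smul_mem _ (h4 v hv hav).1
        · rw [star_smul, mul_smul_comm]; exact F.smul_mem _ (h4 v hv hav).2
      star_mem' := by
        rintro x ⟨h1, h2, h3, h4⟩
        have h1' : Commute (star x) (star a * a) := by
          have := h1.star_star; rwa [hb] at this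
        refine ⟨h1', h3, by rwa [star_star], fun v hv hav => ⟨(h4 v hv hav).2, ?_⟩⟩
        rw [star_star]; exact (h4 v hv hav).1 }
  have hS : IsClosed (S : Set A) := by
    change IsClosed {u : A | Commute u (star a * a) ∧ a * u ∈ F ∧ a * star u ∈ F ∧
        ∀ v, Commute v (star a * a) → a * v ∈ F → a * v * u ∈ F ∧ a * v * star u ∈ F}
    refine IsClosed.inter ?_ (IsClosed.inter ?_ (IsClosed.inter ?_ ?_))
    · exact isClosed_eq (f := fun u => u * (star a * a)) (g := fun u => (star a * a) * u)
        (by fun_prop) (by fun_prop)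
    · exact hFclosed.preimage (f := fun u => a * u) (by fun_prop)
    · exact hFclosed.preimage (f := fun u => a * star u) (by fun_prop)
    · have : {u : A | ∀ v, Commute v (star a * a) → a * v ∈ F →
          a * v * u ∈ F ∧ a * v * star u ∈ F} = ⋂ v, ⋂ (_ : Commute v (star a * a)),
          ⋂ (_ : a * v ∈ F), ({u | a * v * u ∈ F} ∩ {u | a * v * star u ∈ F}) := by
        ext u; simp
      change IsClosed {u : A | ∀ v, Commute v (star a * a) → a * v ∈ F →
          a * v * u ∈ F ∧ a * v * star u ∈ F}
      rw [this]
      refine isClosed_iInter fun v => isClosed_iInter fun _ => isClosed_iInter fun _ => ?_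
      exact (hFclosed.preimage (f := fun u => a * v * u) (by fun_prop)).inter
        (hFclosed.preimage (f := fun u => a * v * star u) (by fun_prop))
  have hmem : star a * a ∈ S :=
    ⟨Commute.refl _, key0, by rw [hb]; exact key0,
      fun v hv hav => ⟨key v hv hav, by rw [hb]; exact key v hv hav⟩⟩
  have : cfcₙ f (star a * a) ∈ S := cfcₙ_mem (𝕜' := ℂ) f hmem
  exact this.2.1

/-- Ramp function. -/
noncomputable def rmp (δ t : ℝ) : ℝ := min 1 (max 0 ((t - δ) / δ))

/-- Truncated inverse square root. -/
noncomputable def ker (δ t : ℝ) : ℝ := (√(max t δ))⁻¹ * rmp δ t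

theorem rmp_cont (δ : ℝ) : Continuous (rmp δ) := by unfold rmp; fun_prop

theorem ker_cont {δ : ℝ} (hδ : 0 < δ) : Continuous (ker δ) := by
  unfold ker
  refine Continuous.mul (Continuous.inv₀ (by fun_prop) fun t => ?_) (rmp_cont δ)
  exact (Real.sqrt_pos.2 (lt_max_of_lt_right hδ)).ne'

theorem rmp_of_le {δ t : ℝ} (hδ : 0 < δ) (h : t ≤ δ) : rmp δ t = 0 := by
  have : (t - δ) / δ ≤ 0 := div_nonpos_of_nonpos_of_nonneg (by linarith) hδ.le
  simp [rmp, this]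

theorem rmp_of_ge {δ t : ℝ} (hδ : 0 < δ) (h : 2 * δ ≤ t) : rmp δ t = 1 := by
  have : 1 ≤ (t - δ) / δ := by rw [le_div_iff₀ hδ]; linarith
  simp [rmp, this]

theorem rmp_nonneg (δ t : ℝ) : 0 ≤ rmp δ t := by simp [rmp]

theorem rmp_le (δ t : ℝ) : rmp δ t ≤ 1 := by simp [rmp]

theorem rmp_zero {δ : ℝ} (hδ : 0 < δ) : rmp δ 0 = 0 := rmp_of_le hδ hδ.le

theorem ker_zero {δ : ℝ} (hδ : 0 < δ) : ker δ 0 = 0 := by simp [ker, rmp_zero hδ]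

theorem ker_sq {δ : ℝ} (hδ : 0 < δ) (t : ℝ) : ker δ t * (t * ker δ t) = rmp δ t * rmp δ t := by
  rcases le_total t δ with h | h
  · simp [ker, rmp_of_le hδ h]
  · have ht : 0 < t := lt_of_lt_of_le hδ h
    have : √t * √t = t := Real.mul_self_sqrt ht.le
    have hs : √t ≠ 0 := (Real.sqrt_pos.2 ht).ne'
    simp only [ker, max_eq_left h]
    field_simp
    rw [pow_two (√t), this]
    ring

theorem rmp_rmp {δ : ℝ} (hδ : 0 < δ) (t : ℝ) : rmp (2 * δ) t * (rmp δ t * rmp δ t) = rmp (2 * δ) t := by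
  rcases le_total t (2 * δ) with h | h
  · simp [rmp_of_le (by linarith : 0 < 2 * δ) h]
  · simp [rmp_of_ge hδ h]

theorem ker_rmp {δ : ℝ} (hδ : 0 < δ) (t : ℝ) :
    ker (2 * δ) t * (rmp δ t * rmp δ t) = ker (2 * δ) t := by
  rw [ker, mul_assoc, rmp_rmp hδ]

theorem cfc_fix (b : A) (hb : IsSelfAdjoint b) (k g : ℝ → ℝ) (hk : Continuous k)
    (hg : Continuous g) (hk0 : k 0 = 0) (hg0 : g 0 = 0)
    (h : ∀ t, g t * (k t * (t * k t)) = g t) :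
    cfcₙ k b * (cfcₙ k b * (b * cfcₙ g b)) = cfcₙ g b := by
  have e1 : b * cfcₙ g b = cfcₙ (fun t => t * g t) b := by
    rw [cfcₙ_mul (fun t => t) g b (by fun_prop) rfl (by fun_prop) hg0, cfcₙ_id' ℝ b]
  rw [e1, ← cfcₙ_mul k _ b (by fun_prop) hk0 (by fun_prop) (by simp),
    ← cfcₙ_mul k _ b (by fun_prop) hk0 (by fun_prop) (by simp)]
  congr 1
  ext t
  linear_combination h t

/-- Norm of `a k(a*a)`. -/
theorem norm_mul_cfc_le (a : A) (k : ℝ → ℝ) (hk : Continuous k) (hk0 : k 0 = 0)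
    (h : ∀ t, |k t * (t * k t)| ≤ 1) : ‖a * cfcₙ k (star a * a)‖ ≤ 1 := by
  have hb : IsSelfAdjoint (star a * a) := IsSelfAdjoint.star_mul_self a
  have hK : star (cfcₙ k (star a * a)) = cfcₙ k (star a * a) :=
    (cfcₙ_predicate (p := IsSelfAdjoint) k (star a * a)).star_eq
  have e : star (a * cfcₙ k (star a * a)) * (a * cfcₙ k (star a * a)) =
      cfcₙ (fun t => k t * (t * k t)) (star a * a) := by
    rw [cfcₙ_mul k (fun t => t * k t) _ (by fun_prop) hk0 (by fun_prop) (by simp),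
      cfcₙ_mul (fun t => t) k _ (by fun_prop) rfl (by fun_prop) hk0, cfcₙ_id' ℝ (star a * a),
      star_mul, hK]
    simp only [mul_assoc]
  have h1 : ‖a * cfcₙ k (star a * a)‖ * ‖a * cfcₙ k (star a * a)‖ ≤ 1 * 1 := by
    rw [← CStarRing.norm_star_mul_self, e, one_mul]
    exact norm_cfcₙ_le fun t _ => h t
  exact nonneg_le_nonneg_of_sq_le_sq zero_le_one h1

theorem norm_sub_cfc_le (a : A) (l : ℝ → ℝ) (hl : Continuous l) (hl0 : l 0 = 0) {c : ℝ}
    (hc : 0 ≤ c) (h : ∀ t, 0 ≤ t → |t * ((l t - 1) * (l t - 1))| ≤ c * c) :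
    ‖a * cfcₙ l (star a * a) - a‖ ≤ c := by
  have hb : IsSelfAdjoint (star a * a) := IsSelfAdjoint.star_mul_self a
  have hK : star (cfcₙ l (star a * a)) = cfcₙ l (star a * a) :=
    (cfcₙ_predicate (p := IsSelfAdjoint) l (star a * a)).star_eq
  have e : star (a * cfcₙ l (star a * a) - a) * (a * cfcₙ l (star a * a) - a) =
      cfcₙ (fun t => t * ((l t - 1) * (l t - 1))) (star a * a) := by
    have e0 : (fun t => t * ((l t - 1) * (l t - 1))) =
        fun t => (l t * (t * l t) - l t * t) - (t * l t - t) := by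
      ext t; ring
    rw [e0, cfcₙ_sub (fun t => l t * (t * l t) - l t * t) (fun t => t * l t - t) _ (by fun_prop)
        (by simp) (by fun_prop) (by simp),
      cfcₙ_sub (fun t => l t * (t * l t)) (fun t => l t * t) _ (by fun_prop)
        (by simp) (by fun_prop) (by simp),
      cfcₙ_sub (fun t => t * l t) (fun t => t) _ (by fun_prop)
        (by simp) (by fun_prop) (by simp),
      cfcₙ_mul l (fun t => t * l t) _ (by fun_prop) hl0 (by fun_prop) (by simp),
      cfcₙ_mul l (fun t => t) _ (by fun_prop) hl0 (by fun_prop) rfl,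
      cfcₙ_mul (fun t => t) l _ (by fun_prop) rfl (by fun_prop) hl0, cfcₙ_id' ℝ (star a * a),
      star_sub, star_mul, hK]
    simp only [mul_assoc, sub_mul, mul_sub]
    abel
  have h1 : ‖a * cfcₙ l (star a * a) - a‖ * ‖a * cfcₙ l (star a * a) - a‖ ≤ c * c := by
    rw [← CStarRing.norm_star_mul_self, e]
    let _ := CStarAlgebra.spectralOrder A
    have := CStarAlgebra.spectralOrderedRing A
    exact norm_cfcₙ_le fun t ht =>
      h t (quasispectrum_nonneg_of_nonneg _ (star_mul_self_nonneg a) t ht)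
  exact nonneg_le_nonneg_of_sq_le_sq hc h1

theorem core (F : Submodule ℂ A) (hFclosed : IsClosed (F : Set A))
    (hFtriple : ∀ x ∈ F, ∀ y ∈ F, ∀ z ∈ F,
      (2 : ℂ)⁻¹ • (x * star y * z + z * star y * x) ∈ F)
    (hCheb : ∀ x : A, ∃! v : A, v ∈ F ∧ ‖x - v‖ = Metric.infDist x (F : Set A))
    (a : A) (ha : a ∈ F)
    (hBP : ¬ ∃ y ∈ F, ∀ z ∈ F,
      z - a * star y * z - z * star y * a + a * star y * z * star y * a = 0)
    {δ : ℝ} (hδ : 0 < δ) (x : A) :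
    ∃ v ∈ F, a * cfcₙ (rmp (2 * (2 * δ))) (star a * a) * star x *
      (a * cfcₙ (rmp (2 * (2 * δ))) (star a * a)) = a * star v * a := by
  have hδ2 : 0 < 2 * δ := by linarith
  have hδ4 : 0 < 2 * (2 * δ) := by linarith
  have hb : IsSelfAdjoint (star a * a) := IsSelfAdjoint.star_mul_self a
  have hsa : ∀ f : ℝ → ℝ, star (cfcₙ f (star a * a)) = cfcₙ f (star a * a) := fun f =>
    (cfcₙ_predicate (p := IsSelfAdjoint) f (star a * a)).star_eq
  have hQ : ∀ u ∈ F, ∀ v ∈ F, u * star v * u ∈ F := by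
    intro u hu v hv
    have := hFtriple u hu v hv u hu
    rw [← two_smul ℂ, smul_smul] at this
    simpa using this
  have hPQ : ∀ u ∈ F, ∀ v ∈ F, ∀ z ∈ F, u * star v * z + z * star v * u ∈ F := by
    intro u hu v hv z hz
    have := F.smul_mem 2 (hFtriple u hu v hv z hz)
    rw [smul_smul] at this
    simpa using this
  have f0 := cfc_fix (star a * a) hb (ker δ) (ker (2 * δ)) (ker_cont hδ) (ker_cont hδ2)
    (ker_zero hδ) (ker_zero hδ2) (fun t => by rw [ker_sq hδ, ker_rmp hδ])
  have f1 := cfc_fix (star a * a) hb (ker (2 * δ)) (rmp (2 * (2 * δ))) (ker_cont hδ2)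
    (rmp_cont _) (ker_zero hδ2) (rmp_zero hδ4) (fun t => by rw [ker_sq hδ2, rmp_rmp hδ2])
  have c1 : star a * a * cfcₙ (ker (2 * δ)) (star a * a) =
      cfcₙ (ker (2 * δ)) (star a * a) * (star a * a) := by
    have := cfcₙ_commute_cfcₙ (fun t : ℝ => t) (ker (2 * δ)) (star a * a)
    rw [cfcₙ_id' ℝ (star a * a)] at this
    exact this.eq
  have m0 : a * (cfcₙ (ker δ) (star a * a) * cfcₙ (ker δ) (star a * a)) ∈ F := by
    rw [← cfcₙ_mul _ _ _ (ker_cont hδ).continuousOn (ker_zero hδ) (ker_cont hδ).continuousOn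
      (ker_zero hδ)]
    exact mul_cfc_mem F hFclosed hFtriple a ha _
  have m1 : a * (cfcₙ (ker (2 * δ)) (star a * a) * cfcₙ (ker (2 * δ)) (star a * a)) ∈ F := by
    rw [← cfcₙ_mul _ _ _ (ker_cont hδ2).continuousOn (ker_zero hδ2) (ker_cont hδ2).continuousOn
      (ker_zero hδ2)]
    exact mul_cfc_mem F hFclosed hFtriple a ha _
  have mh : a * cfcₙ (ker (2 * δ)) (star a * a) ∈ F := mul_cfc_mem F hFclosed hFtriple a ha _
  have nh : ‖a * cfcₙ (ker (2 * δ)) (star a * a)‖ ≤ 1 := by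
    refine norm_mul_cfc_le a _ (ker_cont hδ2) (ker_zero hδ2) fun t => ?_
    rw [ker_sq hδ2, abs_of_nonneg (mul_self_nonneg _)]
    exact mul_le_one₀ (rmp_le _ _) (rmp_nonneg _ _) (rmp_le _ _)
  have s0 := hsa (ker δ)
  have s1 := hsa (ker (2 * δ))
  have s2 := hsa (rmp (2 * (2 * δ)))
  generalize cfcₙ (ker δ) (star a * a) = K0 at *
  generalize cfcₙ (ker (2 * δ)) (star a * a) = K1 at *
  generalize cfcₙ (rmp (2 * (2 * δ))) (star a * a) = L at *
  have f0' : K1 * (star a * (a * (K0 * K0))) = K1 := by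
    have := congrArg star f0
    simpa [s0, s1, mul_assoc] using this
  have f1' : L * (star a * (a * (K1 * K1))) = L := by
    have := congrArg star f1
    simpa [s2, s1, mul_assoc] using this
  have f0a : ∀ t, K0 * (K0 * (star a * (a * (K1 * t)))) = K1 * t := fun t => by
    have := congrArg (· * t) f0
    simpa [mul_assoc] using this
  have f1a : ∀ t, K1 * (K1 * (star a * (a * (L * t)))) = L * t := fun t => by
    have := congrArg (· * t) f1
    simpa [mul_assoc] using this
  have f0b : ∀ t, K1 * (star a * (a * (K0 * (K0 * t)))) = K1 * t := fun t => by
    have := congrArg (· * t) f0'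
    simpa [mul_assoc] using this
  have f1b : ∀ t, L * (star a * (a * (K1 * (K1 * t)))) = L * t := fun t => by
    have := congrArg (· * t) f1'
    simpa [mul_assoc] using this
  have c1a : ∀ t, star a * (a * (K1 * t)) = K1 * (star a * (a * t)) := fun t => by
    have := congrArg (· * t) c1
    simpa [mul_assoc] using this
  have c1' : star a * (a * K1) = K1 * (star a * a) := by rw [← mul_assoc, c1]
  -- the contraction
  have f1c : L * (K1 * (K1 * (star a * a))) = L := by
    rw [← c1', ← c1a, f1']
  obtain ⟨h, hh⟩ : ∃ h, h = a * K1 := ⟨_, rfl⟩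
  rw [← hh] at mh nh
  have hEF : ∀ c ∈ F, h * star (h * star c * h) * h ∈ F := fun c hc =>
    hQ h mh _ (hQ h mh c hc)
  have hEn : ∀ c, ‖h * star (h * star c * h) * h‖ ≤ ‖c‖ := by
    have q : ∀ c, ‖h * star c * h‖ ≤ ‖c‖ := fun c => by
      calc ‖h * star c * h‖ ≤ ‖h‖ * ‖star c‖ * ‖h‖ :=
            (norm_mul_le _ _).trans (by gcongr; exact norm_mul_le _ _)
        _ ≤ 1 * ‖star c‖ * 1 := by gcongr
        _ = ‖c‖ := by simp
    exact fun c => (q _).trans (q c)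
  obtain ⟨w, hw⟩ : ∃ w, w = a * L * star x * (a * L) := ⟨_, rfl⟩
  have hEw : h * star (h * star w * h) * h = w := by
    rw [hw, hh]
    simp only [star_mul, star_star, s1, s2, mul_assoc, f1a, c1', f1c]
  have hEsub : ∀ c d, h * star (h * star (c - d) * h) * h =
      h * star (h * star c * h) * h - h * star (h * star d * h) * h := fun c d => by
    simp only [star_sub, sub_mul, mul_sub]
  have hwF : w ∈ F := by
    obtain ⟨c, ⟨hcF, hcd⟩, huniq⟩ := hCheb w
    have hEc : h * star (h * star c * h) * h = c := by
      refine huniq _ ⟨hEF c hcF, le_antisymm ?_ ?_⟩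
      · have := hEn (w - c)
        rw [hEsub, hEw, hcd] at this
        exact this
      · rw [← dist_eq_norm]
        exact Metric.infDist_le_dist_of_mem (hEF c hcF)
    by_contra hwn
    obtain ⟨D, hD⟩ : ∃ D, D = w - c := ⟨_, rfl⟩
    have hD0 : D ≠ 0 := by
      rintro rfl
      exact hwn (by rw [sub_eq_zero.1 hD.symm]; exact hcF)
    have hED : h * star (h * star D * h) * h = D := by rw [hD, hEsub, hEw, hEc]
    push Not at hBP
    obtain ⟨z, hz, hz0⟩ := hBP _ m0
    obtain ⟨z0, hz0d⟩ : ∃ z0, z0 = z - a * star (a * (K0 * K0)) * z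
      - z * star (a * (K0 * K0)) * a +
      a * star (a * (K0 * K0)) * z * star (a * (K0 * K0)) * a := ⟨_, rfl⟩
    rw [← hz0d] at hz0
    have hz0F : z0 ∈ F := by
      have e : z0 = z - (a * star (a * (K0 * K0)) * z + z * star (a * (K0 * K0)) * a) +
          a * star (a * (K0 * K0) * star z * (a * (K0 * K0))) * a := by
        rw [hz0d]
        simp only [star_mul, star_star, mul_assoc]
        abel
      rw [e]
      exact F.add_mem (F.sub_mem hz (hPQ a ha _ m0 z hz)) (hQ a ha _ (hQ _ m0 z hz))
    have o1 : z0 * star h = 0 := by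
      rw [hz0d, hh]
      simp only [star_mul, s0, s1, sub_mul, add_mul, mul_assoc, f0a]
      abel
    have o2 : star h * z0 = 0 := by
      rw [hz0d, hh]
      simp only [star_mul, s0, s1, mul_sub, mul_add, mul_assoc, f0b]
      abel
    have o1' : h * star z0 = 0 := by simpa using congrArg star o1
    have d1 : D * star z0 = 0 := by
      rw [← hED, mul_assoc, o1', mul_zero]
    have d2 : star D * z0 = 0 := by
      rw [← hED, star_mul, star_mul h, star_star, mul_assoc, mul_assoc, o2, mul_zero, mul_zero]
    obtain ⟨t, ht⟩ : ∃ t : ℂ, t = ((‖D‖ / ‖z0‖ : ℝ) : ℂ) := ⟨_, rfl⟩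
    have hzn : ‖z0‖ ≠ 0 := norm_ne_zero_iff.2 hz0
    have ht0 : t ≠ 0 := by
      rw [ht]
      exact_mod_cast div_ne_zero (norm_ne_zero_iff.2 hD0) hzn
    have htn : ‖t • z0‖ ≤ ‖D‖ := by
      rw [norm_smul, ht, Complex.norm_real, norm_div, norm_norm, norm_norm, div_mul_cancel₀ _ hzn]
    have hle := norm_sub_le_of_orth (d := D) (z := t • z0)
      (by rw [star_smul, mul_smul_comm, d1, smul_zero]) (by rw [mul_smul_comm, d2, smul_zero]) htn
    have hmem : c + t • z0 ∈ F := F.add_mem hcF (F.smul_mem t hz0F)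
    have : c + t • z0 = c := by
      refine huniq _ ⟨hmem, le_antisymm ?_ ?_⟩
      · rw [← hcd, ← hD, ← sub_sub, ← hD]
        exact hle
      · rw [← dist_eq_norm]
        exact Metric.infDist_le_dist_of_mem hmem
    have h0 : t • z0 = 0 := by simpa using this
    rcases smul_eq_zero.1 h0 with h' | h'
    · exact ht0 h'
    · exact hz0 h'
  refine ⟨a * (K1 * K1) * star w * (a * (K1 * K1)), hQ _ m1 _ hwF, ?_⟩
  rw [← hw, hw]
  simp only [star_mul, star_star, s1, s2, mul_assoc, f1a, f1c]

end ChebTriple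


/-- Let `A` be a C*-algebra and `F` a JB*-subtriple of `A` which is a
Chebyshev subspace of `A`. If `a ∈ F` is not Brown–Pedersen quasi-invertible in `F`,
then the closed inner ideal of `A` generated by `a` coincides with the closed inner
ideal of `F` generated by `a`:
`closure {a x* a : x ∈ A} = closure {a x* a : x ∈ F}`. -/
theorem inner_ideal_eq_of_not_BP_quasi_invertible
    {A : Type*} [NonUnitalNormedRing A] [StarRing A] [CStarRing A]
    [NormedSpace ℂ A] [IsScalarTower ℂ A A] [SMulCommClass ℂ A A]
    [StarModule ℂ A] [CompleteSpace A]
    (F : Submodule ℂ A) (hFclosed : IsClosed (F : Set A))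
    (hFtriple : ∀ x ∈ F, ∀ y ∈ F, ∀ z ∈ F,
      (2 : ℂ)⁻¹ • (x * star y * z + z * star y * x) ∈ F)
    (hCheb : ∀ x : A, ∃! v : A, v ∈ F ∧ ‖x - v‖ = Metric.infDist x (F : Set A))
    (a : A) (ha : a ∈ F)
    (hBP : ¬ ∃ y ∈ F, ∀ z ∈ F,
      z - a * star y * z - z * star y * a + a * star y * z * star y * a = 0) :
    closure {w : A | ∃ x : A, w = a * star x * a} =
      closure {w : A | ∃ x ∈ F, w = a * star x * a} := by
  let _ : NonUnitalCStarAlgebra A := {}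
  refine Set.Subset.antisymm ?_ (closure_mono ?_)
  · refine closure_minimal ?_ isClosed_closure
    rintro _ ⟨x, rfl⟩
    let d : ℕ → ℝ := fun n => 1 / ((n : ℝ) + 1)
    have hd : ∀ n, 0 < d n := fun n => by positivity
    have hd0 : Filter.Tendsto d Filter.atTop (nhds 0) := tendsto_one_div_add_atTop_nhds_zero_nat
    have hbound : ∀ n, ‖a * cfcₙ (ChebTriple.rmp (2 * (2 * d n))) (star a * a) - a‖ ≤
        √(8 * d n) := by
      intro n
      have h4 : 0 < 2 * (2 * d n) := by linarith [hd n]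
      refine ChebTriple.norm_sub_cfc_le a _ (ChebTriple.rmp_cont _) (ChebTriple.rmp_zero h4)
        (Real.sqrt_nonneg _) fun t ht => ?_
      rw [Real.mul_self_sqrt (by linarith [hd n]),
        abs_of_nonneg (mul_nonneg ht (mul_self_nonneg _))]
      rcases le_total t (8 * d n) with h | h
      · have h1 := ChebTriple.rmp_nonneg (2 * (2 * d n)) t
        have h2 := ChebTriple.rmp_le (2 * (2 * d n)) t
        have h3 : (ChebTriple.rmp (2 * (2 * d n)) t - 1) *
          (ChebTriple.rmp (2 * (2 * d n)) t - 1) ≤ 1 := by nlinarith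
        calc _ ≤ t * 1 := by gcongr
          _ ≤ _ := by linarith
      · rw [ChebTriple.rmp_of_ge h4 (by linarith)]
        simpa using (hd n).le
    have hu : Filter.Tendsto (fun n => a * cfcₙ (ChebTriple.rmp (2 * (2 * d n))) (star a * a))
        Filter.atTop (nhds a) := by
      rw [tendsto_iff_norm_sub_tendsto_zero]
      refine squeeze_zero (fun _ => norm_nonneg _) hbound ?_
      have := (hd0.const_mul 8).sqrt
      simpa using this
    refine mem_closure_of_tendsto ((hu.mul_const (star x)).mul hu)
      (Filter.Eventually.of_forall fun n => ?_)
    exact ChebTriple.core F hFclosed hFtriple hCheb a ha hBP (hd n) x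
  · rintro _ ⟨x, _, rfl⟩
    exact ⟨x, rfl⟩
end

section
/- Let A be a C*-algebra and let F be a JB*-subtriple of A such that no element of F is Brown–Pedersen quasi-invertible in F. Then dist(e, F) = 1 for every extreme point e of the closed unit ball of A. If moreover F is a Chebyshev subspace of A, then π_F(e) = 0 for every such extreme point e. -/
section helpers

variable {A : Type*} [NonUnitalCStarAlgebra A]

theorem aux_extreme_zero {e d : A} (he : e ∈ Set.extremePoints ℝ (Metric.closedBall (0 : A) 1))
    (h1 : ‖e + d‖ ≤ 1) (h2 : ‖e - d‖ ≤ 1) : d = 0 := by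
  have := (mem_extremePoints.mp he).2 (e + d) (by simpa using h1) (e - d) (by simpa using h2)
    ⟨1/2, 1/2, by norm_num, by norm_num, by norm_num, by module⟩
  simpa using this.1

theorem aux_norm_poly [PartialOrder A] [StarOrderedRing A] {h : A} (h0 : 0 ≤ h) (h1 : ‖h‖ ≤ 1)
    (c : ℝ) (hc : |c| ≤ 1 / 4) :
    ‖h + (2 * c) • (h * (h - h * h)) + (c * c) • (h * ((h - h * h) * (h - h * h)))‖ ≤ 1 := by
  have hs : IsSelfAdjoint h := h0.isSelfAdjoint
  have hk : cfcₙ (fun t : ℝ => t - t * t) h = h - h * h := by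
    rw [cfcₙ_sub (fun t : ℝ => t) (fun t : ℝ => t * t) h, cfcₙ_mul (fun t : ℝ => t) (fun t => t) h,
      cfcₙ_id' ℝ h]
  have key : cfcₙ (fun t : ℝ => t + (2 * c) * (t * (t - t * t))
      + (c * c) * (t * ((t - t * t) * (t - t * t)))) h =
      h + (2 * c) • (h * (h - h * h)) + (c * c) • (h * ((h - h * h) * (h - h * h))) := by
    rw [cfcₙ_add (fun t : ℝ => t + (2 * c) * (t * (t - t * t)))
        (fun t => (c * c) * (t * ((t - t * t) * (t - t * t)))) h,
      cfcₙ_add (fun t : ℝ => t) (fun t => (2 * c) * (t * (t - t * t))) h,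
      cfcₙ_const_mul (2 * c) (fun t : ℝ => (t * (t - t * t))) h,
      cfcₙ_const_mul (c * c) (fun t : ℝ => (t * ((t - t * t) * (t - t * t)))) h,
      cfcₙ_mul (fun t : ℝ => t) (fun t => (t - t * t)) h,
      cfcₙ_mul (fun t : ℝ => t) (fun t => (t - t * t) * (t - t * t)) h,
      cfcₙ_mul (fun t : ℝ => t - t * t) (fun t => (t - t * t)) h, hk, cfcₙ_id' ℝ h]
  rw [← key]
  refine norm_cfcₙ_le fun t ht => ?_
  have t0 : 0 ≤ t := quasispectrum_nonneg_of_nonneg h h0 t ht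
  have t1 : t ≤ 1 := by
    have := norm_apply_le_norm_cfcₙ (fun t : ℝ => t) h ht
    rw [cfcₙ_id' ℝ h, Real.norm_eq_abs] at this
    exact (le_abs_self t).trans (this.trans h1)
  obtain ⟨hc1, hc2⟩ := abs_le.mp hc
  have e1 : t + (2 * c) * (t * (t - t * t)) + (c * c) * (t * ((t - t * t) * (t - t * t)))
      = t * (1 + c * (t * (1 - t))) ^ 2 := by ring
  rw [e1, Real.norm_of_nonneg (by positivity)]
  have s0 : 0 ≤ 1 - t := by linarith
  have hm : 0 ≤ t * (1 - t) := by positivity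
  have hm1 : t * (1 - t) ≤ 1 - t := by nlinarith
  have b1 : 1 + c * (t * (1 - t)) ≤ 1 + (1 - t) / 4 := by nlinarith
  have b0 : 0 ≤ 1 + c * (t * (1 - t)) := by nlinarith
  have b2 : (1 + c * (t * (1 - t))) ^ 2 ≤ (1 + (1 - t) / 4) ^ 2 := by gcongr
  have b3 : (1 + (1 - t) / 4) ^ 2 ≤ 1 + (1 - t) := by nlinarith
  calc t * (1 + c * (t * (1 - t))) ^ 2 ≤ t * (1 + (1 - t)) := by
        gcongr; exact b2.trans b3
    _ ≤ 1 := by nlinarith [sq_nonneg (1 - t)]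

theorem aux_partial_isometry [PartialOrder A] [StarOrderedRing A] {e : A}
    (he : e ∈ Set.extremePoints ℝ (Metric.closedBall (0 : A) 1)) :
    e * star e * e = e := by
  have hn : ‖e‖ ≤ 1 := by simpa using he.1
  set h := star e * e with hh
  have h0 : 0 ≤ h := star_mul_self_nonneg e
  have hs : star h = h := h0.isSelfAdjoint
  have h1 : ‖h‖ ≤ 1 := by
    rw [hh, CStarRing.norm_star_mul_self]; nlinarith [norm_nonneg e]
  have bd : ∀ c : ℝ, |c| ≤ 1 / 4 → ‖e + c • (e * (h - h * h))‖ ≤ 1 := by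
    intro c hc
    have h2 := aux_norm_poly h0 h1 c hc
    have : star (e + c • (e * (h - h * h))) * (e + c • (e * (h - h * h))) =
        h + (2 * c) • (h * (h - h * h)) + (c * c) • (h * ((h - h * h) * (h - h * h))) := by
      simp only [star_add, star_smul, star_mul, star_sub, hs, add_mul, mul_add, smul_mul_assoc,
        mul_smul_comm, star_trivial]
      have e1 : (h - h * h) * star e * e = (h - h * h) * h := by rw [mul_assoc]
      have e2 : star e * (e * (h - h * h)) = h * (h - h * h) := by rw [← mul_assoc]
      have e3 : (h - h * h) * star e * (e * (h - h * h)) = (h - h * h) * (h * (h - h * h)) := by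
        rw [mul_assoc, e2]
      have e4 : (h - h * h) * h = h * (h - h * h) := by noncomm_ring
      rw [e1, e2, e3, ← mul_assoc (h - h * h) h, e4, ← hh, mul_assoc h (h - h * h)]
      module
    rw [← this, CStarRing.norm_star_mul_self] at h2
    nlinarith [norm_nonneg (e + c • (e * (h - h * h)))]
  have z : (1/4 : ℝ) • (e * (h - h * h)) = 0 := by
    apply aux_extreme_zero he (bd _ (by norm_num [abs_le]))
    have := bd (-(1/4)) (by norm_num [abs_le])
    rwa [neg_smul, ← sub_eq_add_neg] at this
  have z1 : e * (h - h * h) = 0 := by simpa using z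
  have z2 : h * (h - h * h) = 0 := by rw [hh, mul_assoc, ← hh, z1, mul_zero]
  have z3 : h - h * h = 0 := by
    rw [← CStarRing.star_mul_self_eq_zero_iff]
    simp only [star_sub, star_mul, hs]
    calc (h - h * h) * (h - h * h) = h * (h - h * h) - h * (h * (h - h * h)) := by noncomm_ring
      _ = 0 := by rw [z2]; simp
  have z4 : e - e * h = 0 := by
    rw [← CStarRing.star_mul_self_eq_zero_iff]
    simp only [star_sub, star_mul, hs]
    calc (star e - h * star e) * (e - e * h) = (h - h * h) - (h - h * h) * h := by
          rw [hh]; noncomm_ring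
      _ = 0 := by rw [z3]; simp
  rw [mul_assoc, ← hh]
  exact (sub_eq_zero.mp z4).symm

theorem aux_kadison [PartialOrder A] [StarOrderedRing A] {e : A}
    (he : e ∈ Set.extremePoints ℝ (Metric.closedBall (0 : A) 1)) (z : A) :
    z - e * star e * z - z * (star e * e) + e * star e * z * (star e * e) = 0 := by
  have hpi := aux_partial_isometry he
  have hpi' : star e * e * star e = star e := by
    have := congrArg star hpi
    simpa [mul_assoc] using this
  have hn : ‖e‖ ≤ 1 := by simpa using he.1
  have main : ∀ d : A, ‖d‖ ≤ 1 → star e * d = 0 → d * star e = 0 → d = 0 := by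
    intro d hd h1 h2
    have h1' : star d * e = 0 := by simpa using congrArg star h1
    have bd : ∀ d : A, ‖d‖ ≤ 1 → star e * d = 0 → d * star e = 0 → ‖e + d‖ ≤ 1 := by
      intro d hd h1 h2
      have h1' : star d * e = 0 := by simpa using congrArg star h1
      have h2' : e * star d = 0 := by simpa using congrArg star h2
      have : ‖star e * e + star d * d‖ = max ‖star e * e‖ ‖star d * d‖ := by
        have hp : star e * e * (star d * d) = 0 := by
          rw [mul_assoc, ← mul_assoc e, h2']; simp
        have hp' : (star d * d) * (star e * e) = 0 := by
          rw [mul_assoc, ← mul_assoc d, h2]; simp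
        apply IsStarNormal.norm_add_eq_max
        · exact (IsSelfAdjoint.star_mul_self e).isStarNormal
        · exact (IsSelfAdjoint.star_mul_self d).isStarNormal
        · rw [Commute, SemiconjBy, hp, hp']
        · exact hp
      have h3 : star (e + d) * (e + d) = star e * e + star d * d := by
        rw [star_add, add_mul, mul_add, mul_add, h1, h1']; simp
      rw [← h3, CStarRing.norm_star_mul_self, CStarRing.norm_star_mul_self,
        CStarRing.norm_star_mul_self] at this
      have h4 : max (‖e‖ * ‖e‖) (‖d‖ * ‖d‖) ≤ 1 := by
        apply max_le <;> nlinarith [norm_nonneg e, norm_nonneg d]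
      nlinarith [norm_nonneg (e + d)]
    apply aux_extreme_zero he (bd d hd h1 h2)
    rw [sub_eq_add_neg]
    exact bd (-d) (by simpa using hd) (by simp [h1]) (by simp [h2])
  set d := z - e * star e * z - z * (star e * e) + e * star e * z * (star e * e) with hd
  have h1 : star e * d = 0 := by
    rw [hd]
    calc _ = star e * z - (star e * e * star e) * z - star e * z * (star e * e)
            + (star e * e * star e) * z * (star e * e) := by noncomm_ring
      _ = 0 := by rw [hpi']; noncomm_ring
  have h2 : d * star e = 0 := by
    rw [hd]
    calc _ = z * star e - e * star e * z * star e - z * (star e * e * star e)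
            + e * star e * z * (star e * e * star e) := by noncomm_ring
      _ = 0 := by rw [hpi']; noncomm_ring
  by_contra hne
  have hp : 0 < ‖d‖ := norm_pos_iff.mpr hne
  have := main (‖d‖⁻¹ • d) (by rw [norm_smul, norm_inv, norm_norm, inv_mul_cancel₀ hp.ne'])
    (by rw [mul_smul_comm, h1, smul_zero]) (by rw [smul_mul_assoc, h2, smul_zero])
  rw [smul_eq_zero] at this
  rcases this with h | h
  · exact hp.ne' (inv_eq_zero.mp h)
  · exact hne h

/-- From closeness to an extreme point: an algebraic generalized inverse. -/
theorem aux_ginv {e x : A} (hpi : e * star e * e = e) (hn : ‖e‖ ≤ 1) (hx : ‖e - x‖ < 1) :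
    ∃ w : A, w * x * (star e * e) = star e * e ∧ e * star e * x * w = e * star e := by
  have hpi' : star e * e * star e = star e := by
    have := congrArg star hpi
    simpa [mul_assoc] using this
  set s : A := star e * (e - x) * (star e * e) with hs
  have hsn : ‖s‖ < 1 := by
    calc ‖s‖ ≤ ‖star e * (e - x)‖ * ‖star e * e‖ := norm_mul_le _ _
      _ ≤ (‖star e‖ * ‖e - x‖) * ‖star e * e‖ := by gcongr; exact norm_mul_le _ _
      _ = (‖e‖ * ‖e - x‖) * (‖e‖ * ‖e‖) := by rw [norm_star, CStarRing.norm_star_mul_self]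
      _ ≤ (1 * ‖e - x‖) * (1 * 1) := by gcongr
      _ < 1 := by simpa using hx
  have hsn' : ‖(s : Unitization ℂ A)‖ < 1 := by rwa [Unitization.norm_inr]
  let u := Units.oneSub (s : Unitization ℂ A) hsn'
  let E : Unitization ℂ A := (e : Unitization ℂ A)
  let X : Unitization ℂ A := (x : Unitization ℂ A)
  have hu : (u : Unitization ℂ A) = 1 - star E * (E - X) * (star E * E) := by
    simp [u, hs, E, X, Units.val_oneSub]
  have hP : E * star E * E = E := by
    have := congrArg (fun a : A => (a : Unitization ℂ A)) hpi
    simpa [E] using this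
  have hP' : star E * E * star E = star E := by
    have := congrArg (fun a : A => (a : Unitization ℂ A)) hpi'
    simpa [E] using this
  have c1 : (u : Unitization ℂ A) * (star E * E) = star E * X * (star E * E) := by
    rw [hu]
    calc _ = star E * E - (star E * E * star E) * E * star E * E
              + star E * X * (star E * E * star E) * E := by noncomm_ring
      _ = _ := by simp only [hP', mul_assoc, sub_self, zero_add]
  have c2 : (star E * E) * (u : Unitization ℂ A) = star E * X * (star E * E) := by
    rw [hu]
    calc _ = star E * E - (star E * E * star E) * E * star E * E
              + (star E * E * star E) * X * star E * E := by noncomm_ring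
      _ = _ := by simp only [hP', mul_assoc, sub_self, zero_add]
  have c3 : (star E * E) * (↑u⁻¹ : Unitization ℂ A) = ↑u⁻¹ * (star E * E) := by
    rw [Units.eq_inv_mul_iff_mul_eq, ← mul_assoc, c1, ← c2, mul_assoc, Units.mul_inv, mul_one]
  have hw : ∃ w : A, (w : Unitization ℂ A) = ↑u⁻¹ * star E := by
    refine ⟨((↑u⁻¹ : Unitization ℂ A) * star E).snd, ?_⟩
    ext <;> simp [E]
  obtain ⟨w, hw⟩ := hw
  have d1 : (w : Unitization ℂ A) * X * (star E * E) = star E * E := by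
    rw [hw, mul_assoc, mul_assoc, ← mul_assoc (star E), ← c1, Units.inv_mul_cancel_left]
  have d2 : E * star E * X * (w : Unitization ℂ A) = E * star E := by
    rw [hw]
    calc E * star E * X * (↑u⁻¹ * star E) = E * star E * X * (↑u⁻¹ * (star E * E)) * star E := by
          conv_lhs => enter [2, 2]; rw [← hP']
          simp only [mul_assoc]
      _ = E * (star E * X * (star E * E)) * ↑u⁻¹ * star E := by
          rw [← c3]; simp only [mul_assoc]
      _ = E * (star E * E) * star E := by
          rw [← c2]
          simp only [mul_assoc, Units.mul_inv_cancel_left]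
      _ = E * star E := by rw [← mul_assoc E, hP]
  refine ⟨w, ?_, ?_⟩
  · apply Unitization.inr_injective (R := ℂ)
    simpa [E, X] using d1
  · apply Unitization.inr_injective (R := ℂ)
    simpa [E, X] using d2

/-- Moore–Penrose type inverse through functional calculus. -/
theorem aux_mp [PartialOrder A] [StarOrderedRing A] {x w : A} (hw : x * w * x = x) :
    ∃ f : ℝ → ℝ, x * cfcₙ f (star x * x) * (star x * x) = x ∧
      IsSelfAdjoint (cfcₙ f (star x * x)) := by
  set h := star x * x with hh
  have h0 : 0 ≤ h := star_mul_self_nonneg x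
  have hsa : IsSelfAdjoint h := h0.isSelfAdjoint
  have hs : star h = h := hsa
  have hw' : star x * star w * star x = star x := by
    have := congrArg star hw
    simpa [mul_assoc] using this
  have i1 : h ≤ h * (w * star w) * h := by
    have := star_mul_self_nonneg (star w * star x * x - x)
    have e : star (star w * star x * x - x) * (star w * star x * x - x)
        = h * (w * star w) * h - h := by
      simp only [star_sub, star_mul, star_star]
      calc _ = star x * x * (w * star w) * (star x * x) - star x * (x * w * x)
          - (star x * star w * star x) * x + star x * x := by noncomm_ring
        _ = _ := by rw [hw, hw', ← hh]; abel
    rw [e] at this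
    exact sub_nonneg.mp this
  have i2 : h * (w * star w) * h ≤ ‖w * star w‖ • (h * h) := by
    have := CStarAlgebra.star_left_conjugate_le_norm_smul (a := h) (b := w * star w)
      (IsSelfAdjoint.mul_star_self w)
    rwa [hs] at this
  set C := ‖w * star w‖ with hC
  have C0 : 0 ≤ C := norm_nonneg _
  have gap : ∀ t ∈ quasispectrum ℝ h, t ≤ C * (t * t) := by
    rw [← cfcₙ_le_iff (fun t : ℝ => t) (fun t => C * (t * t)) h,
      cfcₙ_const_mul C (fun t : ℝ => t * t) h, cfcₙ_mul (fun t : ℝ => t) (fun t => t) h,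
      cfcₙ_id' ℝ h]
    exact i1.trans i2
  have hcont : ContinuousOn (fun t : ℝ => t⁻¹) (quasispectrum ℝ h) := by
    have dp : 0 < 1 / (C + 1) := by positivity
    have hc2 : Continuous (fun t : ℝ => t / (max t (1 / (C + 1))) ^ 2) := by
      refine Continuous.div (by fun_prop) (by fun_prop) fun t => ?_
      have : 0 < max t (1 / (C + 1)) := lt_max_of_lt_right dp
      positivity
    refine hc2.continuousOn.congr fun t ht => ?_
    have t0 : 0 ≤ t := quasispectrum_nonneg_of_nonneg h h0 t ht
    rcases t0.eq_or_lt with rfl | tp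
    · simp
    · have g := gap t ht
      have g1 : 1 ≤ C * t := by
        by_contra hlt
        nlinarith
      have g2 : 1 / (C + 1) ≤ t := by
        rw [div_le_iff₀ (by positivity)]
        nlinarith
      simp only [max_eq_left g2]
      field_simp
  refine ⟨fun t => t⁻¹, ?_, ?_⟩
  · have k1 : cfcₙ (fun t : ℝ => t⁻¹) h * h = cfcₙ (fun t : ℝ => t⁻¹ * t) h := by
      rw [cfcₙ_mul (fun t : ℝ => t⁻¹) (fun t => t) h hcont (by simp), cfcₙ_id' ℝ h]
    have k2 : h * (cfcₙ (fun t : ℝ => t⁻¹) h * h) = h := by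
      conv_rhs => rw [← cfcₙ_id' ℝ h]
      rw [k1]
      conv_lhs => enter [1]; rw [← cfcₙ_id' ℝ h]
      rw [← cfcₙ_mul (fun t : ℝ => t) (fun t => t⁻¹ * t) h (by fun_prop) (by simp)
        (hcont.mul (by fun_prop)) (by simp)]
      congr 1
      ext t
      by_cases ht : t = 0 <;> simp [ht]
    rw [mul_assoc]
    set c := cfcₙ (fun t : ℝ => t⁻¹) h * h with hc
    rw [← sub_eq_zero, ← CStarRing.star_mul_self_eq_zero_iff]
    calc star (x * c - x) * (x * c - x) = star c * (h * c) - star c * h - (h * c - h) := by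
          rw [hh]; simp only [star_sub, star_mul]; noncomm_ring
      _ = 0 := by rw [k2]; simp
  · exact cfcₙ_predicate _ h

theorem aux_mem (F : Submodule ℂ A) (hFclosed : IsClosed (F : Set A))
    (hFtriple : ∀ x ∈ F, ∀ y ∈ F, ∀ z ∈ F,
      (2 : ℂ)⁻¹ • (x * star y * z + z * star y * x) ∈ F) {x : A} (hx : x ∈ F) (f : ℝ → ℝ) :
    x * cfcₙ f (star x * x) ∈ F := by
  set h := star x * x with hh
  have hs : star h = h := by simp [hh]
  let S : NonUnitalStarSubalgebra ℝ A :=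
    { carrier := {k | (k * h = h * k ∧ star k * h = h * star k) ∧
        ∀ v ∈ F, x * star x * v = v * h → v * k ∈ F ∧ v * star k ∈ F}
      add_mem' := by
        rintro a b ⟨⟨a1, a2⟩, a3⟩ ⟨⟨b1, b2⟩, b3⟩
        refine ⟨⟨by rw [add_mul, mul_add, a1, b1], by rw [star_add, add_mul, mul_add, a2, b2]⟩, fun v hv hv' => ?_⟩
        rw [star_add, mul_add, mul_add]
        exact ⟨F.add_mem (a3 v hv hv').1 (b3 v hv hv').1, F.add_mem (a3 v hv hv').2 (b3 v hv hv').2⟩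
      zero_mem' := by simp
      mul_mem' := by
        rintro a b ⟨⟨a1, a2⟩, a3⟩ ⟨⟨b1, b2⟩, b3⟩
        refine ⟨⟨by rw [mul_assoc, b1, ← mul_assoc, a1, mul_assoc],
          by rw [star_mul, mul_assoc, a2, ← mul_assoc, b2, mul_assoc]⟩, fun v hv hv' => ?_⟩
        rw [star_mul, ← mul_assoc, ← mul_assoc]
        refine ⟨(b3 _ (a3 v hv hv').1 ?_).1, (a3 _ (b3 v hv hv').2 ?_).2⟩
        · rw [← mul_assoc, hv', mul_assoc v, mul_assoc v, a1]
        · rw [← mul_assoc, hv', mul_assoc v, mul_assoc v, b2]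
      smul_mem' := by
        rintro c a ⟨⟨a1, a2⟩, a3⟩
        refine ⟨⟨by rw [smul_mul_assoc, mul_smul_comm, a1],
          by rw [star_smul, smul_mul_assoc, mul_smul_comm, a2]⟩, fun v hv hv' => ?_⟩
        rw [star_smul, mul_smul_comm, mul_smul_comm]
        exact ⟨F.smul_of_tower_mem _ (a3 v hv hv').1, F.smul_of_tower_mem _ (a3 v hv hv').2⟩
      star_mem' := by
        rintro a ⟨⟨a1, a2⟩, a3⟩
        refine ⟨⟨a2, by simpa using a1⟩, fun v hv hv' => ?_⟩
        rw [star_star]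
        exact (a3 v hv hv').symm }
  have hSc : IsClosed (S : Set A) := by
    have : (S : Set A) = ({k | k * h = h * k} ∩ {k | star k * h = h * star k}) ∩
        ⋂ v ∈ {v | v ∈ F ∧ x * star x * v = v * h},
          ({k | v * k ∈ (F : Set A)} ∩ {k | v * star k ∈ (F : Set A)}) := by
      ext k
      simp only [Set.mem_inter_iff, Set.mem_iInter, Set.mem_setOf_eq, SetLike.mem_coe, and_imp]
      rfl
    rw [this]
    refine IsClosed.inter (IsClosed.inter ?_ ?_) (isClosed_biInter fun v _ => IsClosed.inter ?_ ?_)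
    · exact isClosed_eq (by fun_prop) (by fun_prop)
    · exact isClosed_eq (by fun_prop) (by fun_prop)
    · exact hFclosed.preimage (by fun_prop)
    · exact hFclosed.preimage (by fun_prop)
  have hhS : h ∈ S := by
    have key : ∀ v ∈ F, x * star x * v = v * h → v * h ∈ F := by
      intro v hv hv'
      have := hFtriple v hv x hx x hx
      rw [hv', mul_assoc, ← hh, ← two_smul ℂ, smul_smul] at this
      simpa using this
    refine ⟨⟨rfl, by rw [hs]⟩, fun v hv hv' => ?_⟩
    rw [hs]
    exact ⟨key v hv hv', key v hv hv'⟩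
  have hm : cfcₙ f h ∈ S :=
    NonUnitalStarAlgebra.elemental.le_of_mem hSc hhS (cfcₙ_mem_elemental f h)
  exact (hm.2 x hx (by rw [hh, mul_assoc])).1

theorem aux_main_s5 [PartialOrder A] [StarOrderedRing A]
    (F : Submodule ℂ A) (hFclosed : IsClosed (F : Set A))
    (hFtriple : ∀ x ∈ F, ∀ y ∈ F, ∀ z ∈ F,
      (2 : ℂ)⁻¹ • (x * star y * z + z * star y * x) ∈ F)
    {e x : A} (he : e ∈ Set.extremePoints ℝ (Metric.closedBall (0 : A) 1))
    (hx : x ∈ F) (hd : ‖e - x‖ < 1) :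
    ∃ y ∈ F, ∀ z ∈ F,
      z - x * star y * z - z * star y * x + x * star y * z * star y * x = 0 := by
  have hpi := aux_partial_isometry he
  obtain ⟨w, w1, w2⟩ := aux_ginv hpi (by simpa using he.1) hd
  have zero : ∀ Y : A, e * star e * Y = 0 → Y * (star e * e) = 0 → Y = 0 := by
    intro Y h1 h2
    have := aux_kadison he Y
    simpa [h1, h2] using this
  have hw : x * w * x = x := by
    rw [← sub_eq_zero]
    apply zero
    · calc _ = (e * star e * x * w) * x - e * star e * x := by noncomm_ring
        _ = 0 := by rw [w2]; simp
    · calc _ = x * (w * x * (star e * e)) - x * (star e * e) := by noncomm_ring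
        _ = 0 := by rw [w1]; simp
  obtain ⟨f, f1, f2⟩ := aux_mp hw
  set c := cfcₙ f (star x * x) with hc
  refine ⟨x * c, aux_mem F hFclosed hFtriple hx f, fun z _ => ?_⟩
  have y1 : x * star (x * c) * x = x := by
    rw [star_mul, f2.star_eq]
    simpa only [mul_assoc] using f1
  set y := star (x * c) with hy
  have Z : z - x * w * z - z * (w * x) + x * w * z * (w * x) = 0 := by
    apply zero
    · calc _ = e * star e * z - (e * star e * x * w) * z - e * star e * z * (w * x)
              + (e * star e * x * w) * z * (w * x) := by noncomm_ring
        _ = 0 := by rw [w2]; noncomm_ring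
    · calc _ = z * (star e * e) - x * w * z * (star e * e) - z * (w * x * (star e * e))
              + x * w * z * (w * x * (star e * e)) := by noncomm_ring
        _ = 0 := by rw [w1]; noncomm_ring
  -- pass from `w` to `y`
  set T := z - x * w * z - z * (w * x) + x * w * z * (w * x) with hT
  have : T - x * y * T - T * (y * x) + x * y * T * (y * x) =
      z - x * y * z - z * y * x + x * y * z * y * x := by
    have L : ∀ a : A, x * (y * (x * a)) = x * a := fun a => by
      conv_rhs => rw [← y1]
      simp only [mul_assoc]
    have R : x * (y * x) = x := by rw [← mul_assoc, y1]
    rw [hT]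
    simp only [mul_sub, sub_mul, mul_add, add_mul, mul_assoc, L, R]
    abel
  rw [← this, Z]
  simp

end helpers

/-- Let `A` be a C*-algebra and `F` a JB*-subtriple of `A` such that no
element of `F` is Brown–Pedersen quasi-invertible in `F`. Then `dist(e, F) = 1` for
every extreme point `e` of the closed unit ball of `A`; moreover, if `F` is a
Chebyshev subspace of `A`, then the best approximation of any such `e` in `F` is `0`. -/
theorem dist_extreme_point_eq_one
    {A : Type*} [NonUnitalNormedRing A] [StarRing A] [CStarRing A]
    [NormedSpace ℂ A] [IsScalarTower ℂ A A] [SMulCommClass ℂ A A]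
    [StarModule ℂ A] [CompleteSpace A]
    (F : Submodule ℂ A) (hFclosed : IsClosed (F : Set A))
    (hFtriple : ∀ x ∈ F, ∀ y ∈ F, ∀ z ∈ F,
      (2 : ℂ)⁻¹ • (x * star y * z + z * star y * x) ∈ F)
    (hBP : ∀ u ∈ F, ¬ ∃ y ∈ F, ∀ z ∈ F,
      z - u * star y * z - z * star y * u + u * star y * z * star y * u = 0) :
    (∀ e ∈ Set.extremePoints ℝ (Metric.closedBall (0 : A) 1),
        Metric.infDist e (F : Set A) = 1) ∧
    ((∀ x : A, ∃! v : A, v ∈ F ∧ ‖x - v‖ = Metric.infDist x (F : Set A)) →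
      ∀ e ∈ Set.extremePoints ℝ (Metric.closedBall (0 : A) 1),
        ∀ p ∈ F, ‖e - p‖ = Metric.infDist e (F : Set A) → p = 0) := by
  letI : NonUnitalCStarAlgebra A := { }
  letI : PartialOrder A := CStarAlgebra.spectralOrder A
  haveI : StarOrderedRing A := CStarAlgebra.spectralOrderedRing A
  have hdist : ∀ e ∈ Set.extremePoints ℝ (Metric.closedBall (0 : A) 1),
      Metric.infDist e (F : Set A) = 1 := by
    intro e he
    have hn : ‖e‖ ≤ 1 := by simpa using he.1
    apply le_antisymm
    · exact (Metric.infDist_le_dist_of_mem (F.zero_mem)).trans (by simpa using hn)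
    · rw [Metric.le_infDist ⟨0, F.zero_mem⟩]
      intro x hx
      by_contra hlt
      rw [dist_eq_norm, not_le] at hlt
      exact hBP x hx (aux_main_s5 F hFclosed hFtriple he hx hlt)
  refine ⟨hdist, fun hC e he p hp hpd => ?_⟩
  have hn : ‖e‖ ≤ 1 := by simpa using he.1
  have h1 := hdist e he
  have h2 : Metric.infDist e (F : Set A) ≤ ‖e‖ := by
    simpa using Metric.infDist_le_dist_of_mem (x := e) (s := (F : Set A)) F.zero_mem
  have h3 : ‖e - 0‖ = Metric.infDist e (F : Set A) := by
    rw [sub_zero]; linarith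
  exact (hC e).unique ⟨hp, hpd⟩ ⟨F.zero_mem, h3⟩
end

section
/- Let A be a C*-algebra, let F be a JB*-subtriple of A which is a Chebyshev subspace of A, and let a be a nonzero element of F. Then every x ∈ A orthogonal to a belongs to F; that is, {x ∈ A : a x* = 0 and x* a = 0} ⊆ F. -/
section helpers
variable {A : Type*} [NonUnitalCStarAlgebra A]

open scoped CStarAlgebra in
open Unitization in
theorem cheb_left_contr (c z : A) (hc : ‖c‖ ≤ 1) : ‖z - c * star c * z‖ ≤ ‖z‖ := by
  letI : PartialOrder (Unitization ℂ A) := CStarAlgebra.spectralOrder _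
  letI : StarOrderedRing (Unitization ℂ A) := CStarAlgebra.spectralOrderedRing _
  have hp : (0 : Unitization ℂ A) ≤ (c : Unitization ℂ A) * star (c : Unitization ℂ A) :=
    mul_star_self_nonneg _
  have hn : ‖(c : Unitization ℂ A) * star (c : Unitization ℂ A)‖ ≤ 1 := by
    rw [CStarRing.norm_self_mul_star, norm_inr]
    nlinarith [norm_nonneg c]
  have h1 := (CStarAlgebra.norm_le_one_iff_of_nonneg _ hp).mp hn
  have h2 : ‖1 - (c : Unitization ℂ A) * star (c : Unitization ℂ A)‖ ≤ 1 := by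
    rw [CStarAlgebra.norm_le_one_iff_of_nonneg _ (sub_nonneg.mpr h1)]
    exact sub_le_self _ hp
  have h3 : ((z - c * star c * z : A) : Unitization ℂ A)
      = (1 - (c : Unitization ℂ A) * star (c : Unitization ℂ A)) * z := by
    rw [sub_mul, one_mul]
    simp
  rw [← norm_inr (𝕜 := ℂ), h3, ← norm_inr (𝕜 := ℂ) (a := z)]
  calc _ ≤ _ := norm_mul_le _ _
    _ ≤ _ := mul_le_of_le_one_left (norm_nonneg _) h2

theorem cheb_right_contr (c z : A) (hc : ‖c‖ ≤ 1) : ‖z - z * (star c * c)‖ ≤ ‖z‖ := by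
  have h := cheb_left_contr (star c) (star z) (by simpa using hc)
  rw [← norm_star, ← norm_star z]
  simpa [mul_assoc] using h

theorem cheb_norm_add (y c : A) (h : star y * c = 0) (h' : c * star y = 0) :
    ‖y + c‖ * ‖y + c‖ = max (‖y‖ * ‖y‖) (‖c‖ * ‖c‖) := by
  have h2 : star c * y = 0 := by simpa using congrArg star h
  have e : star (y + c) * (y + c) = star y * y + star c * c := by
    simp [mul_add, add_mul, h, h2]
  rw [← CStarRing.norm_star_mul_self, e,
    IsSelfAdjoint.norm_add_eq_max (.star_mul_self y) (.star_mul_self c),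
    CStarRing.norm_star_mul_self, CStarRing.norm_star_mul_self]
  have : y * star c = 0 := by simpa using congrArg star h'
  rw [mul_assoc, ← mul_assoc y, this]; simp

theorem cheb_main (F : Submodule ℂ A)
    (hFtriple : ∀ x ∈ F, ∀ y ∈ F, ∀ z ∈ F,
      (2 : ℂ)⁻¹ • (x * star y * z + z * star y * x) ∈ F)
    (hCheb : ∀ x : A, ∃! v : A, v ∈ F ∧ ‖x - v‖ = Metric.infDist x (F : Set A))
    (a : A) (ha : a ∈ F) (ha0 : a ≠ 0) (x : A) (hx1 : a * star x = 0) (hx2 : star x * a = 0) :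
    x ∈ F := by
  obtain ⟨b, ⟨hbF, hb⟩, huniq⟩ := hCheb x
  have key0 : ∀ v ∈ F, ‖x - v‖ ≤ ‖x - b‖ → v = b := by
    intro v hv hle
    refine huniq v ⟨hv, le_antisymm (hb ▸ hle) ?_⟩
    rw [← dist_eq_norm]
    exact Metric.infDist_le_dist_of_mem hv
  have hQ : ∀ u ∈ F, ∀ v ∈ F, u * star v * u ∈ F := by
    intro u hu v hv
    have := hFtriple u hu v hv u hu
    rwa [← two_smul ℂ, smul_smul, inv_mul_cancel₀ two_ne_zero, one_smul] at this
  have hD : ∀ u ∈ F, ∀ v ∈ F, u * star u * v + v * star u * u ∈ F := by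
    intro u hu v hv
    have := F.smul_mem 2 (hFtriple u hu u hu v hv)
    rwa [smul_smul, mul_inv_cancel₀ two_ne_zero, one_smul] at this
  have key : ∀ c ∈ F, ‖c‖ ≤ 1 → c * star x = 0 → star x * c = 0 →
      c * star c * b + b * star c * c = c * star (c * star b * c) * c := by
    intro c hc hn h1 h2
    have h1' : x * star c = 0 := by simpa using congrArg star h1
    have h2' : star c * x = 0 := by simpa using congrArg star h2
    have hm : b - (c * star c * b + b * star c * c) + c * star (c * star b * c) * c ∈ F :=
      F.add_mem (F.sub_mem hbF (hD c hc b hbF)) (hQ c hc _ (hQ c hc b hbF))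
    have e : x - (b - (c * star c * b + b * star c * c) + c * star (c * star b * c) * c)
        = ((x - b) - c * star c * (x - b)) - ((x - b) - c * star c * (x - b)) * (star c * c) := by
      have e1 : c * star c * x = 0 := by rw [mul_assoc, h2', mul_zero]
      have e2 : x * (star c * c) = 0 := by rw [← mul_assoc, h1', zero_mul]
      simp only [mul_sub, sub_mul, e1, e2, star_mul, star_star, zero_mul, mul_assoc]
      abel
    have := key0 _ hm (by
      rw [e]
      exact (cheb_right_contr c _ hn).trans (cheb_left_contr c _ hn))
    rw [sub_add, sub_eq_self, sub_eq_zero] at this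
    exact this
  -- normalise
  obtain ⟨c, hcF, hc1, hcx, hxc⟩ :
      ∃ c ∈ F, ‖c‖ = 1 ∧ c * star x = 0 ∧ star x * c = 0 := by
    refine ⟨((‖a‖ : ℂ)⁻¹) • a, F.smul_mem _ ha, ?_, by rw [smul_mul_assoc, hx1, smul_zero], by rw [mul_smul_comm, hx2, smul_zero]⟩
    rw [norm_smul]
    simp [norm_ne_zero_iff.mpr ha0]
  have k1 := key c hcF hc1.le hcx hxc
  have k2 := key ((2 : ℂ)⁻¹ • c) (F.smul_mem _ hcF)
    (by rw [norm_smul, hc1]; norm_num) (by rw [smul_mul_assoc, hcx, smul_zero]) (by rw [mul_smul_comm, hxc, smul_zero])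
  have hs : star ((2 : ℂ)⁻¹) = (2 : ℂ)⁻¹ := by simp
  simp only [star_smul, star_mul, star_star, smul_mul_assoc, mul_smul_comm, smul_smul, hs,
    ← smul_add] at k1 k2
  rw [k1] at k2
  have hz : c * (star c * (b * star c)) * c = 0 := by
    by_contra hne
    have := smul_left_injective ℂ hne k2
    norm_num at this
  rw [hz] at k1
  have hPb : c * star c * b = 0 := by
    rw [← norm_eq_zero, ← mul_self_eq_zero, ← CStarRing.norm_star_mul_self, norm_eq_zero]
    have e : c * star c * b = - (b * star c * c) := eq_neg_of_add_eq_zero_left k1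
    have : c * star c * (c * star c * b) = 0 := by
      rw [e, mul_neg, neg_eq_zero, ← hz]; simp only [mul_assoc]
    have e2 : star (c * star c * b) = star b * (c * star c) := by simp
    rw [e2, mul_assoc, this, mul_zero]
  have hbQ : b * star c * c = 0 := by rwa [hPb, zero_add] at k1
  have hcb : star c * b = 0 := by
    rw [← norm_eq_zero, ← mul_self_eq_zero, ← CStarRing.norm_star_mul_self, norm_eq_zero]
    rw [star_mul, star_star, mul_assoc, ← mul_assoc c, hPb, mul_zero]
  have hbc : b * star c = 0 := by
    rw [← norm_eq_zero, ← mul_self_eq_zero, ← CStarRing.norm_self_mul_star, norm_eq_zero]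
    rw [star_mul, star_star, ← mul_assoc, hbQ, zero_mul]
  have hcb' : star b * c = 0 := by simpa using congrArg star hcb
  have hbc' : c * star b = 0 := by simpa using congrArg star hbc
  have hfin := key0 (b - (‖x - b‖ : ℂ) • c) (F.sub_mem hbF (F.smul_mem _ hcF)) (by
    have := cheb_norm_add (x - b) ((‖x - b‖ : ℂ) • c) (by rw [mul_smul_comm, star_sub, sub_mul, hxc, hcb', sub_zero, smul_zero])
      (by rw [smul_mul_assoc, star_sub, mul_sub, hcx, hbc', sub_zero, smul_zero])
    rw [norm_smul, hc1] at this
    simp only [Complex.norm_real, norm_norm, mul_one, max_self] at this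
    rw [← sub_add]
    exact (mul_self_inj_of_nonneg (norm_nonneg _) (norm_nonneg _) |>.mp this).le)
  rw [sub_eq_self, smul_eq_zero] at hfin
  rcases hfin with h | h
  · have : x = b := by simpa [sub_eq_zero] using h
    rwa [this]
  · simp [h] at hc1

end helpers

/-- Let `A` be a C*-algebra, `F` a JB*-subtriple of `A` which is a
Chebyshev subspace of `A`, and `a` a nonzero element of `F`. Then every `x ∈ A`
orthogonal to `a` belongs to `F`: `{x ∈ A : a x* = 0 ∧ x* a = 0} ⊆ F`. -/
theorem orthogonal_complement_subset_cebysev_subtriple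
    {A : Type*} [NonUnitalNormedRing A] [StarRing A] [CStarRing A]
    [NormedSpace ℂ A] [IsScalarTower ℂ A A] [SMulCommClass ℂ A A]
    [StarModule ℂ A] [CompleteSpace A]
    (F : Submodule ℂ A) (hFclosed : IsClosed (F : Set A))
    (hFtriple : ∀ x ∈ F, ∀ y ∈ F, ∀ z ∈ F,
      (2 : ℂ)⁻¹ • (x * star y * z + z * star y * x) ∈ F)
    (hCheb : ∀ x : A, ∃! v : A, v ∈ F ∧ ‖x - v‖ = Metric.infDist x (F : Set A))
    (a : A) (ha : a ∈ F) (ha0 : a ≠ 0) :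
    {x : A | a * star x = 0 ∧ star x * a = 0} ⊆ (F : Set A) := by
  rintro x ⟨h1, h2⟩
  letI : NonUnitalCStarAlgebra A := { }
  exact cheb_main F hFtriple hCheb a ha ha0 x h1 h2
end

section
/- Let A be a C*-algebra and let F be a JB*-subtriple of A which is a Chebyshev subspace of A. If there exist three nonzero mutually orthogonal elements a, b, c ∈ F (so F has rank at least three), then F = A. -/
open Polynomial in
theorem aux_cfc_mem {U : Type*} [CStarAlgebra U] (G : Submodule ℂ U) (hG : IsClosed (G : Set U))
    (a : U) (ha : a ∈ G) (step : ∀ w ∈ G, w * (star a * a) ∈ G) (k : ℝ → ℝ) (hk : Continuous k) :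
    a * cfc k (star a * a) ∈ G := by
  have hsa : IsSelfAdjoint (star a * a) := IsSelfAdjoint.star_mul_self a
  have hpow : ∀ n : ℕ, a * (star a * a) ^ n ∈ G := by
    intro n
    induction n with
    | zero => simpa using ha
    | succ n ih =>
      rw [pow_succ, ← mul_assoc]
      exact step _ ih
  have hpoly : ∀ p : ℝ[X], a * aeval (star a * a) p ∈ G := by
    intro p
    induction p using Polynomial.induction_on' with
    | add p q hp hq =>
      rw [map_add, mul_add]
      exact G.add_mem hp hq
    | monomial n r =>
      rw [aeval_monomial, ← Algebra.smul_def, mul_smul_comm]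
      have := G.smul_mem (r : ℂ) (hpow n)
      simpa using this
  rw [← SetLike.mem_coe, ← hG.closure_eq, Metric.mem_closure_iff]
  intro ε hε
  set N : ℝ := ‖star a * a‖ * ‖(1 : U)‖
  have hδ : 0 < ε / (2 * (‖a‖ + 1)) := by positivity
  obtain ⟨p, hp⟩ := exists_polynomial_near_of_continuousOn (-N) N k hk.continuousOn _ hδ
  refine ⟨_, hpoly p, ?_⟩
  rw [dist_eq_norm, ← mul_sub, ← cfc_polynomial p (star a * a) hsa,
    ← cfc_sub k p.eval (star a * a) hk.continuousOn p.continuous.continuousOn]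
  have h1 : ‖cfc (fun x => k x - p.eval x) (star a * a)‖ ≤ ε / (2 * (‖a‖ + 1)) := by
    refine norm_cfc_le hδ.le fun x hx => ?_
    have hx' : ‖x‖ ≤ N := spectrum.norm_le_norm_mul_of_mem hx
    rw [Real.norm_eq_abs, abs_le] at hx'
    rw [norm_sub_rev]
    exact (hp x hx').le
  calc _ ≤ ‖a‖ * ‖cfc (fun x => k x - p.eval x) (star a * a)‖ := norm_mul_le _ _
    _ ≤ (‖a‖ + 1) * (ε / (2 * (‖a‖ + 1))) := by
        gcongr
        linarith
    _ = ε / 2 := by field_simp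
    _ < ε := by linarith

theorem aux_fun {U : Type*} [CStarAlgebra U] [PartialOrder U] [StarOrderedRing U]
    (q : U) (hqpos : 0 ≤ q) (hq0 : q ≠ 0) :
    ∃ s m : ℝ → ℝ, Continuous s ∧ Continuous m ∧
      IsSelfAdjoint (cfc s q) ∧ IsSelfAdjoint (cfc m q) ∧
      cfc s q * (cfc s q * (q * cfc m q)) = cfc m q ∧
      cfc m q * (cfc s q * (q * cfc s q)) = cfc m q ∧
      ‖cfc s q * (q * cfc s q)‖ ≤ 1 ∧ cfc m q * (q * cfc m q) ≠ 0 := by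
  have hsa : IsSelfAdjoint q := .of_nonneg hqpos
  have : Nontrivial U := ⟨q, 0, hq0⟩
  obtain ⟨N, hNdef⟩ : ∃ N : ℝ, N = ‖q‖ := ⟨_, rfl⟩
  have hN : 0 < N := by rw [hNdef]; exact norm_pos_iff.mpr hq0
  have hNspec : N ∈ spectrum ℝ q := by
    rw [hNdef]; exact CStarAlgebra.norm_mem_spectrum_of_nonneg hqpos
  have hmaxpos : ∀ t, 0 < max t (N / 2) := fun t => lt_max_of_lt_right (by linarith)
  obtain ⟨s, hs, hss⟩ : ∃ s : ℝ → ℝ, Continuous s ∧ ∀ t, s t * s t = 1 / max t (N / 2) := by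
    refine ⟨fun t => 1 / Real.sqrt (max t (N / 2)), ?_, ?_⟩
    · refine Continuous.div continuous_const (by fun_prop) fun t => ?_
      exact (Real.sqrt_pos.mpr (hmaxpos t)).ne'
    · intro t
      simp only
      rw [div_mul_div_comm, Real.mul_self_sqrt (hmaxpos t).le, one_mul]
  obtain ⟨m, hm, hmdef⟩ : ∃ m : ℝ → ℝ, Continuous m ∧ ∀ t, m t = max 0 (t - N / 2) :=
    ⟨fun t => max 0 (t - N / 2), by fun_prop, fun _ => rfl⟩
  have hstm : ∀ t, s t * (s t * (t * m t)) = m t := by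
    intro t
    rw [← mul_assoc, hss, ← mul_assoc, hmdef]
    rcases le_total t (N / 2) with h | h
    · rw [max_eq_left (a := (0 : ℝ)) (by linarith)]; simp
    · rw [max_eq_left h, one_div, inv_mul_cancel₀ (by linarith), one_mul]
  have hid : cfc (fun t : ℝ => t) q = q := cfc_id' ℝ q
  have hq2 : ∀ f g : ℝ → ℝ, Continuous f → Continuous g →
      cfc f q * (q * cfc g q) = cfc (fun t => f t * (t * g t)) q := by
    intro f g hf hg
    rw [cfc_mul f (fun t => t * g t) q hf.continuousOn (continuous_id.mul hg).continuousOn,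
      cfc_mul (fun t => t) g q continuous_id.continuousOn hg.continuousOn, hid]
  refine ⟨s, m, hs, hm, cfc_predicate s q, cfc_predicate m q, ?_, ?_, ?_, ?_⟩
  · rw [hq2 s m hs hm, ← cfc_mul s (fun t => s t * (t * m t)) q hs.continuousOn
      (hs.mul (continuous_id.mul hm)).continuousOn]
    exact cfc_congr fun t _ => hstm t
  · rw [hq2 s s hs hs, ← cfc_mul m (fun t => s t * (t * s t)) q hm.continuousOn
      (hs.mul (continuous_id.mul hs)).continuousOn]
    refine cfc_congr fun t _ => ?_
    have := hstm t
    linarith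
  · rw [hq2 s s hs hs]
    refine norm_cfc_le zero_le_one fun t ht => ?_
    have ht0 : 0 ≤ t := spectrum_nonneg_of_nonneg hqpos ht
    have : s t * (t * s t) = t / max t (N / 2) := by
      have := hss t
      rw [mul_left_comm, this]; ring
    rw [this, Real.norm_eq_abs, abs_of_nonneg (div_nonneg ht0 (hmaxpos t).le),
      div_le_one (hmaxpos t)]
    exact le_max_left _ _
  · rw [hq2 m m hm hm]
    intro h1
    have h2 : ‖m N * (N * m N)‖ ≤ ‖cfc (fun t => m t * (t * m t)) q‖ :=
      norm_apply_le_norm_cfc (fun t => m t * (t * m t)) q hNspec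
        (hm.mul (continuous_id.mul hm)).continuousOn hsa
    rw [h1, norm_zero, norm_le_zero_iff] at h2
    have h3 : m N = N / 2 := by
      rw [hmdef, max_eq_right (by linarith)]; ring
    rw [h3] at h2
    have : 0 < N / 2 * (N * (N / 2)) := by positivity
    linarith

/-- From a nonzero `a ∈ F` we build a contraction `u ∈ F` that acts as a unit on some nonzero
`e ∈ F`, both lying in the "support" of `a`. -/
theorem aux_exists {U : Type*} [CStarAlgebra U] [PartialOrder U] [StarOrderedRing U]
    (F : Submodule ℂ U) (hF : IsClosed (F : Set U))
    (hT : ∀ x ∈ F, ∀ y ∈ F, ∀ z ∈ F, x * star y * z + z * star y * x ∈ F)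
    (a : U) (ha : a ∈ F) (ha0 : a ≠ 0) :
    ∃ u ∈ F, ∃ e ∈ F, e ≠ 0 ∧ ‖u‖ ≤ 1 ∧ u * star u * e = e ∧ e * (star u * u) = e ∧
      ∀ x : U, star a * x = 0 → x * star a = 0 → star u * x = 0 ∧ x * star u = 0 := by
  let G : Submodule ℂ U :=
    { carrier := {w | w ∈ F ∧ a * star a * w = w * (star a * a) ∧
        (∀ x : U, x * star a = 0 → x * star w = 0) ∧ ∀ x : U, star a * x = 0 → star w * x = 0}
      add_mem' := by
        rintro v w ⟨h1, h2, h3, h4⟩ ⟨k1, k2, k3, k4⟩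
        refine ⟨F.add_mem h1 k1, by rw [mul_add, add_mul, h2, k2], fun x hx => ?_, fun x hx => ?_⟩
        · rw [star_add, mul_add, h3 x hx, k3 x hx, add_zero]
        · rw [star_add, add_mul, h4 x hx, k4 x hx, add_zero]
      zero_mem' := by simp
      smul_mem' := by
        rintro r w ⟨h1, h2, h3, h4⟩
        refine ⟨F.smul_mem r h1, by rw [mul_smul_comm, smul_mul_assoc, h2], fun x hx => ?_,
          fun x hx => ?_⟩
        · rw [star_smul, mul_smul_comm, h3 x hx, smul_zero]
        · rw [star_smul, smul_mul_assoc, h4 x hx, smul_zero] }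
  have hGF : ∀ w, w ∈ G ↔ (w ∈ F ∧ a * star a * w = w * (star a * a) ∧
        (∀ x : U, x * star a = 0 → x * star w = 0) ∧ ∀ x : U, star a * x = 0 → star w * x = 0) :=
    fun w => Iff.rfl
  have hGc : IsClosed (G : Set U) := by
    have : (G : Set U) = (F : Set U) ∩ ({w | a * star a * w = w * (star a * a)} ∩
      ({w | ∀ x : U, x * star a = 0 → x * star w = 0} ∩
        {w | ∀ x : U, star a * x = 0 → star w * x = 0})) := rfl
    rw [this]
    refine hF.inter ((isClosed_eq (by fun_prop) (by fun_prop)).inter (IsClosed.inter ?_ ?_))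
    · simp only [Set.ofPred_forall]
      exact isClosed_iInter fun x => isClosed_iInter fun _ =>
        isClosed_eq (by fun_prop) (by fun_prop)
    · simp only [Set.ofPred_forall]
      exact isClosed_iInter fun x => isClosed_iInter fun _ =>
        isClosed_eq (by fun_prop) (by fun_prop)
  have haG : a ∈ G := ⟨ha, by simp [mul_assoc], fun x hx => hx, fun x hx => hx⟩
  have hstep : ∀ w ∈ G, w * (star a * a) ∈ G := by
    rintro w ⟨h1, h2, h3, h4⟩
    refine ⟨?_, ?_, ?_, ?_⟩
    · have := F.smul_mem (2 : ℂ)⁻¹ (hT w h1 a ha a ha)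
      rw [h2, mul_assoc, ← two_smul ℂ, smul_smul] at this
      simpa using this
    · rw [← mul_assoc, h2]
    · intro x hx
      simp only [star_mul, star_star, ← mul_assoc]
      simp [hx]
    · intro x hx
      simp only [star_mul, star_star, mul_assoc]
      simp [h4 x hx]
  have hsa : IsSelfAdjoint (star a * a) := IsSelfAdjoint.star_mul_self a
  have hmem := aux_cfc_mem G hGc a haG hstep
  set q := star a * a with hq
  have hN : 0 < ‖q‖ := by
    rw [norm_pos_iff, hq]
    simpa [CStarRing.star_mul_self_eq_zero_iff] using ha0
  have hqpos : 0 ≤ q := star_mul_self_nonneg a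
  obtain ⟨s, m, hs, hm, hSsa, hMsa, hSSqM, hMSqS, hSqS, hMqM⟩ :=
    aux_fun q hqpos (norm_pos_iff.mp hN)
  have hu := hmem s hs
  have he := hmem m hm
  rw [hGF] at hu he
  refine ⟨a * cfc s q, hu.1, a * cfc m q, he.1, ?_, ?_, ?_, ?_, ?_⟩
  · intro h0
    have h1 : star (a * cfc m q) * (a * cfc m q) = 0 := by rw [h0]; simp
    rw [star_mul, hMsa.star_eq, mul_assoc, ← mul_assoc (star a), ← hq] at h1
    exact hMqM h1
  · have h1 : ‖star (a * cfc s q) * (a * cfc s q)‖ ≤ 1 := by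
      rwa [star_mul, hSsa.star_eq, mul_assoc, ← mul_assoc (star a), ← hq]
    rw [CStarRing.norm_star_mul_self] at h1
    nlinarith [norm_nonneg (a * cfc s q)]
  · rw [star_mul, hSsa.star_eq]
    calc a * cfc s q * (cfc s q * star a) * (a * cfc m q)
        = a * (cfc s q * (cfc s q * ((star a * a) * cfc m q))) := by simp only [mul_assoc]
      _ = _ := by rw [← hq, hSSqM]
  · rw [star_mul, hSsa.star_eq]
    calc a * cfc m q * (cfc s q * star a * (a * cfc s q))
        = a * (cfc m q * (cfc s q * ((star a * a) * cfc s q))) := by simp only [mul_assoc]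
      _ = _ := by rw [← hq, hMSqS]
  · intro x h1 h2
    exact ⟨hu.2.2.2 x h1, hu.2.2.1 x h2⟩

theorem aux_norm_one_sub {U : Type*} [CStarAlgebra U] [PartialOrder U] [StarOrderedRing U]
    (u : U) (hu : ‖u‖ ≤ 1) : ‖1 - u * star u‖ ≤ 1 := by
  have h0 : 0 ≤ u * star u := mul_star_self_nonneg u
  have h1 : u * star u ≤ 1 := by
    rw [← CStarAlgebra.norm_le_one_iff_of_nonneg _ h0, CStarRing.norm_self_mul_star]
    nlinarith [norm_nonneg u]
  rw [CStarAlgebra.norm_le_one_iff_of_nonneg _ (sub_nonneg.mpr h1)]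
  exact sub_le_self _ h0

theorem aux_norm_orth {U : Type*} [CStarAlgebra U] (y z : U) (h1 : star z * y = 0)
    (h2 : y * star z = 0) (hzy : ‖z‖ ≤ ‖y‖) : ‖y - z‖ ≤ ‖y‖ := by
  have h1' : star y * z = 0 := by
    have := congrArg star h1
    simpa using this
  have h : star (y - z) * (y - z) = star y * y + star z * z := by
    simp [sub_mul, mul_sub, h1, h1']
  have h3 : ‖star y * y + star z * z‖ = max ‖star y * y‖ ‖star z * z‖ :=
    IsSelfAdjoint.norm_add_eq_max (.star_mul_self y) (.star_mul_self z)
      (by rw [mul_assoc, ← mul_assoc y, h2]; simp)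
  rw [← h] at h3
  simp only [CStarRing.norm_star_mul_self] at h3
  have h4 : ‖z‖ * ‖z‖ ≤ ‖y‖ * ‖y‖ := by gcongr
  rw [max_eq_left h4] at h3
  exact (mul_self_le_mul_self_iff (norm_nonneg _) (norm_nonneg _)).mpr h3.le

theorem aux_orth_mem {U : Type*} [CStarAlgebra U] [PartialOrder U] [StarOrderedRing U]
    (F : Submodule ℂ U) (hF : IsClosed (F : Set U))
    (hT : ∀ x ∈ F, ∀ y ∈ F, ∀ z ∈ F, x * star y * z + z * star y * x ∈ F)
    (a : U) (ha : a ∈ F) (ha0 : a ≠ 0) (x : U) (h1 : star a * x = 0) (h2 : x * star a = 0)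
    (hC : ∃ v ∈ F, ∀ w ∈ F, w ≠ v → ‖x - v‖ < ‖x - w‖) : x ∈ F := by
  obtain ⟨u, hu, e, he, he0, hu1, hue, heu, hux⟩ := aux_exists F hF hT a ha ha0
  obtain ⟨hx1, hx2⟩ := hux x h1 h2
  obtain ⟨v, hv, hmin⟩ := hC
  have hSv : (1 - u * star u) * v * (1 - star u * u) = v := by
    by_contra hne
    have hmem : (1 - u * star u) * v * (1 - star u * u) ∈ F := by
      have e1 := hT u hu u hu v hv
      have e2 := F.smul_mem (2 : ℂ)⁻¹ (hT u hu v hv u hu)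
      rw [← two_smul ℂ, smul_smul, inv_mul_cancel₀ two_ne_zero, one_smul] at e2
      have e3 := F.smul_mem (2 : ℂ)⁻¹ (hT u hu _ e2 u hu)
      rw [← two_smul ℂ, smul_smul, inv_mul_cancel₀ two_ne_zero, one_smul] at e3
      have := F.add_mem (F.sub_mem hv e1) e3
      convert this using 1
      simp only [star_mul, star_star]
      noncomm_ring
    have hlt := hmin _ hmem hne
    have heq : x - (1 - u * star u) * v * (1 - star u * u) =
        (1 - u * star u) * (x - v) * (1 - star u * u) := by
      have e1 : (1 - u * star u) * x * (1 - star u * u) = x := by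
        have : (1 - u * star u) * x = x := by
          rw [sub_mul, mul_assoc, hx1]; simp
        rw [this, mul_sub, ← mul_assoc, hx2]; simp
      rw [mul_sub (1 - u * star u) x v, sub_mul _ _ (1 - star u * u), e1]
    have hn1 := aux_norm_one_sub u hu1
    have hn2 := aux_norm_one_sub (star u) (by simpa using hu1)
    rw [star_star] at hn2
    have : ‖(1 - u * star u) * (x - v) * (1 - star u * u)‖ ≤ 1 * ‖x - v‖ * 1 :=
      (norm_mul_le _ _).trans (by
        gcongr
        exact (norm_mul_le _ _).trans (by gcongr))
    rw [heq] at hlt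
    linarith
  by_contra hxF
  have hy0 : x - v ≠ 0 := fun h => hxF (by rw [sub_eq_zero.mp h]; exact hv)
  have hue' : star e * (u * star u) = star e := by
    have := congrArg star hue
    simpa [mul_assoc] using this
  have heu' : star u * u * star e = star e := by
    have := congrArg star heu
    simpa [mul_assoc] using this
  have ev1 : star e * v = 0 := by
    rw [← hSv, ← mul_assoc, ← mul_assoc, mul_sub (star e) 1, hue']; simp
  have ev2 : v * star e = 0 := by
    rw [← hSv, mul_assoc, sub_mul (1 : U) (star u * u), heu']; simp
  have ex1 : star e * x = 0 := by
    rw [← hue', mul_assoc, mul_assoc, hx1]; simp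
  have ex2 : x * star e = 0 := by
    rw [← heu', ← mul_assoc, ← mul_assoc, hx2]; simp
  set t : ℝ := ‖x - v‖ / ‖e‖ with ht
  have hepos : 0 < ‖e‖ := norm_pos_iff.mpr he0
  have htpos : 0 < t := div_pos (norm_pos_iff.mpr hy0) hepos
  have hle := aux_norm_orth (x - v) ((t : ℂ) • e)
    (by rw [star_smul, smul_mul_assoc, mul_sub, ex1, ev1]; simp)
    (by rw [star_smul, mul_smul_comm, sub_mul, ex2, ev2]; simp)
    (by rw [norm_smul, Complex.norm_real, Real.norm_eq_abs, abs_of_pos htpos, ht,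
          div_mul_cancel₀ _ hepos.ne'])
  have hlt := hmin (v + (t : ℂ) • e) (F.add_mem hv (F.smul_mem _ he)) (by
    intro h
    rw [add_eq_left, smul_eq_zero] at h
    rcases h with h | h
    · exact htpos.ne' (by exact_mod_cast h)
    · exact he0 h)
  rw [← sub_sub] at hlt
  linarith

theorem aux_main_s8 {U : Type*} [CStarAlgebra U] [PartialOrder U] [StarOrderedRing U]
    (F I : Submodule ℂ U) (hF : IsClosed (F : Set U))
    (hIl : ∀ x ∈ I, ∀ y, y * x ∈ I) (hIr : ∀ x ∈ I, ∀ y, x * y ∈ I)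
    (hT : ∀ x ∈ F, ∀ y ∈ F, ∀ z ∈ F, x * star y * z + z * star y * x ∈ F)
    (hC : ∀ x ∈ I, ∃ v ∈ F, ∀ w ∈ F, w ≠ v → ‖x - v‖ < ‖x - w‖)
    (a b c : U) (ha : a ∈ F) (hb : b ∈ F) (hc : c ∈ F)
    (ha0 : a ≠ 0) (hb0 : b ≠ 0) (hc0 : c ≠ 0)
    (hab : a * star b = 0 ∧ star b * a = 0)
    (hac : a * star c = 0 ∧ star c * a = 0)
    (hbc : b * star c = 0 ∧ star c * b = 0) : I ≤ F := by
  obtain ⟨u, hu, e, he, he0, -, hue, heu, hux⟩ := aux_exists F hF hT a ha ha0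
  obtain ⟨v, hv, f, hf, hf0, -, hvf, hfv, hvx⟩ := aux_exists F hF hT b hb hb0
  obtain ⟨hub1, hub2⟩ := hux b (by simpa using congrArg star hab.2)
    (by simpa using congrArg star hab.1)
  obtain ⟨huc1, huc2⟩ := hux c (by simpa using congrArg star hac.2)
    (by simpa using congrArg star hac.1)
  obtain ⟨hvc1, hvc2⟩ := hvx c (by simpa using congrArg star hbc.2)
    (by simpa using congrArg star hbc.1)
  obtain ⟨hvu1, hvu2⟩ := hvx u (by simpa using congrArg star hub1)
    (by simpa using congrArg star hub2)
  have huv1 : star u * v = 0 := by simpa using congrArg star hvu1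
  have huv2 : v * star u = 0 := by simpa using congrArg star hvu2
  have hue' : star e * (u * star u) = star e := by simpa [mul_assoc] using congrArg star hue
  have heu' : star u * u * star e = star e := by simpa [mul_assoc] using congrArg star heu
  have hvf' : star f * (v * star v) = star f := by simpa [mul_assoc] using congrArg star hvf
  have hfv' : star v * v * star f = star f := by simpa [mul_assoc] using congrArg star hfv
  have hcu : star c * u = 0 := by simpa using congrArg star huc1
  have hcv : star c * v = 0 := by simpa using congrArg star hvc1
  have huc : u * star c = 0 := by simpa using congrArg star huc2
  have hvc : v * star c = 0 := by simpa using congrArg star hvc2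
  have hfu : star f * u = 0 := by
    rw [← hvf', mul_assoc, mul_assoc, hvu1]; simp
  have huf : u * star f = 0 := by
    rw [← hfv', ← mul_assoc, ← mul_assoc, hvu2]; simp
  have hev : star e * v = 0 := by
    rw [← hue', mul_assoc, mul_assoc, huv1]; simp
  have hve : v * star e = 0 := by
    rw [← heu', ← mul_assoc, ← mul_assoc, huv2]; simp
  have key := fun (k : U) (hk : k ∈ F) (hk0 : k ≠ 0) (x : U) (hx : x ∈ I)
    (h1 : star k * x = 0) (h2 : x * star k = 0) => aux_orth_mem F hF hT k hk hk0 x h1 h2 (hC x hx)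
  -- right splitting along `u` : annihilated by `c` or `e`
  have split1 : ∀ y ∈ I, star c * y = 0 → star e * y = 0 → y ∈ F := by
    intro y hy h1 h2
    have m1 : y * (star u * u) ∈ F := key c hc hc0 _ (hIr y hy _)
      (by rw [← mul_assoc, h1, zero_mul]) (by rw [mul_assoc, mul_assoc, huc]; simp)
    have m2 : y * (1 - star u * u) ∈ F := key e he he0 _ (hIr y hy _)
      (by rw [← mul_assoc, h2, zero_mul]) (by rw [mul_assoc, sub_mul, heu']; simp)
    have := F.add_mem m1 m2
    rwa [← mul_add, add_sub_cancel, mul_one] at this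
  have split2 : ∀ y ∈ I, star c * y = 0 → star f * y = 0 → y ∈ F := by
    intro y hy h1 h2
    have m1 : y * (star v * v) ∈ F := key c hc hc0 _ (hIr y hy _)
      (by rw [← mul_assoc, h1, zero_mul]) (by rw [mul_assoc, mul_assoc, hvc]; simp)
    have m2 : y * (1 - star v * v) ∈ F := key f hf hf0 _ (hIr y hy _)
      (by rw [← mul_assoc, h2, zero_mul]) (by rw [mul_assoc, sub_mul, hfv']; simp)
    have := F.add_mem m1 m2
    rwa [← mul_add, add_sub_cancel, mul_one] at this
  have split3 : ∀ y ∈ I, star e * y = 0 → star f * y = 0 → y ∈ F := by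
    intro y hy h1 h2
    have m1 : y * (star v * v) ∈ F := key e he he0 _ (hIr y hy _)
      (by rw [← mul_assoc, h1, zero_mul]) (by rw [mul_assoc, mul_assoc, hve]; simp)
    have m2 : y * (1 - star v * v) ∈ F := key f hf hf0 _ (hIr y hy _)
      (by rw [← mul_assoc, h2, zero_mul]) (by rw [mul_assoc, sub_mul, hfv']; simp)
    have := F.add_mem m1 m2
    rwa [← mul_add, add_sub_cancel, mul_one] at this
  intro x hx
  have m1 : u * star u * x ∈ F := split2 _ (hIl x hx _)
    (by rw [← mul_assoc, ← mul_assoc, hcu]; simp) (by rw [← mul_assoc, ← mul_assoc, hfu]; simp)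
  have m2 : v * star v * x ∈ F := split1 _ (hIl x hx _)
    (by rw [← mul_assoc, ← mul_assoc, hcv]; simp) (by rw [← mul_assoc, ← mul_assoc, hev]; simp)
  have m3 : (1 - u * star u - v * star v) * x ∈ F := split3 _ (hIl x hx _)
    (by
      rw [← mul_assoc, mul_sub, mul_sub, hue', ← mul_assoc, hev]; simp)
    (by
      rw [← mul_assoc, mul_sub, mul_sub, hvf', ← mul_assoc, hfu]; simp)
  have := F.add_mem (F.add_mem m1 m2) m3
  rw [← add_mul, ← add_mul] at this
  simpa using this

theorem aux_nonunital {A : Type*} [NonUnitalCStarAlgebra A]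
    (F : Submodule ℂ A) (hFclosed : IsClosed (F : Set A))
    (hFtriple : ∀ x ∈ F, ∀ y ∈ F, ∀ z ∈ F,
      (2 : ℂ)⁻¹ • (x * star y * z + z * star y * x) ∈ F)
    (hCheb : ∀ x : A, ∃! v : A, v ∈ F ∧ ‖x - v‖ = Metric.infDist x (F : Set A))
    (a b c : A) (ha : a ∈ F) (hb : b ∈ F) (hc : c ∈ F)
    (ha0 : a ≠ 0) (hb0 : b ≠ 0) (hc0 : c ≠ 0)
    (hab : a * star b = 0 ∧ star b * a = 0)
    (hac : a * star c = 0 ∧ star c * a = 0)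
    (hbc : b * star c = 0 ∧ star c * b = 0) :
    F = ⊤ := by
  letI : PartialOrder (Unitization ℂ A) := CStarAlgebra.spectralOrder _
  haveI : StarOrderedRing (Unitization ℂ A) := CStarAlgebra.spectralOrderedRing _
  let ι : A →ₗ[ℂ] Unitization ℂ A := Unitization.inrHom ℂ ℂ A
  have hι : ∀ x, ι x = (x : Unitization ℂ A) := fun _ => rfl
  have hinj : Function.Injective ι := Unitization.inr_injective
  have hnorm : ∀ x, ‖ι x‖ = ‖x‖ := fun x => Unitization.norm_inr x
  have hclosed : IsClosed ((F.map ι : Submodule ℂ (Unitization ℂ A)) : Set (Unitization ℂ A)) := by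
    rw [Submodule.map_coe]
    exact (Unitization.isometry_inr (𝕜 := ℂ) (A := A)).isClosedEmbedding.isClosedMap _ hFclosed
  have hle := aux_main_s8 (F.map ι) (LinearMap.range ι) hclosed
    (by
      rintro _ ⟨x, rfl⟩ y
      induction y using Unitization.ind with
      | inl_add_inr r y =>
        refine ⟨r • x + y * x, ?_⟩
        simp [hι, add_mul, Unitization.inl_mul_inr])
    (by
      rintro _ ⟨x, rfl⟩ y
      induction y using Unitization.ind with
      | inl_add_inr r y =>
        refine ⟨r • x + x * y, ?_⟩
        simp [hι, mul_add, Unitization.inr_mul_inl])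
    (by
      rintro _ ⟨x, hx, rfl⟩ _ ⟨y, hy, rfl⟩ _ ⟨z, hz, rfl⟩
      refine ⟨x * star y * z + z * star y * x, ?_, ?_⟩
      · have := F.smul_mem (2 : ℂ) (hFtriple x hx y hy z hz)
        rwa [smul_smul, mul_inv_cancel₀ two_ne_zero, one_smul] at this
      · simp [hι])
    (by
      rintro _ ⟨x, rfl⟩
      obtain ⟨v, ⟨hv, hvd⟩, huniq⟩ := hCheb x
      refine ⟨ι v, ⟨v, hv, rfl⟩, ?_⟩
      rintro _ ⟨w, hw, rfl⟩ hne
      rw [← map_sub, ← map_sub, hnorm, hnorm]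
      have hle : ‖x - v‖ ≤ ‖x - w‖ := by
        rw [hvd, ← dist_eq_norm]
        exact Metric.infDist_le_dist_of_mem hw
      refine lt_of_le_of_ne hle fun h => hne ?_
      rw [huniq w ⟨hw, by rw [← h, hvd]⟩])
    (ι a) (ι b) (ι c) ⟨a, ha, rfl⟩ ⟨b, hb, rfl⟩ ⟨c, hc, rfl⟩
    (fun h => ha0 (hinj (by simpa using h))) (fun h => hb0 (hinj (by simpa using h)))
    (fun h => hc0 (hinj (by simpa using h)))
    (by simp only [hι, ← Unitization.inr_star, ← Unitization.inr_mul, hab.1, hab.2]; simp)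
    (by simp only [hι, ← Unitization.inr_star, ← Unitization.inr_mul, hac.1, hac.2]; simp)
    (by simp only [hι, ← Unitization.inr_star, ← Unitization.inr_mul, hbc.1, hbc.2]; simp)
  rw [eq_top_iff]
  intro x _
  obtain ⟨y, hy, hyx⟩ := hle ⟨x, rfl⟩
  rwa [← hinj hyx]


/-- Let `A` be a C*-algebra and `F` a JB*-subtriple of `A` which is a
Chebyshev subspace of `A`. If there exist three nonzero mutually orthogonal elements
`a, b, c ∈ F` (so `F` has rank at least three), then `F = A`. -/
theorem cebysev_subtriple_rank_three_eq
    {A : Type*} [NonUnitalNormedRing A] [StarRing A] [CStarRing A]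
    [NormedSpace ℂ A] [IsScalarTower ℂ A A] [SMulCommClass ℂ A A]
    [StarModule ℂ A] [CompleteSpace A]
    (F : Submodule ℂ A) (hFclosed : IsClosed (F : Set A))
    (hFtriple : ∀ x ∈ F, ∀ y ∈ F, ∀ z ∈ F,
      (2 : ℂ)⁻¹ • (x * star y * z + z * star y * x) ∈ F)
    (hCheb : ∀ x : A, ∃! v : A, v ∈ F ∧ ‖x - v‖ = Metric.infDist x (F : Set A))
    (a b c : A) (ha : a ∈ F) (hb : b ∈ F) (hc : c ∈ F)
    (ha0 : a ≠ 0) (hb0 : b ≠ 0) (hc0 : c ≠ 0)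
    (hab : a * star b = 0 ∧ star b * a = 0)
    (hac : a * star c = 0 ∧ star c * a = 0)
    (hbc : b * star c = 0 ∧ star c * b = 0) :
    F = ⊤ := by
  letI : NonUnitalCStarAlgebra A := {}
  exact aux_nonunital F hFclosed hFtriple hCheb a b c ha hb hc ha0 hb0 hc0 hab hac hbc
end

section
/- Let A be a C*-algebra and let B be a norm-closed *-subalgebra of A which is a Chebyshev subspace of A. If there exist three nonzero mutually orthogonal elements a, b, c ∈ B, then B = A. -/
open Unitization in
theorem aux_exists_s9 {A : Type*} [NonUnitalCStarAlgebra A]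
    (B : NonUnitalStarSubalgebra ℂ A) (hBclosed : IsClosed (B : Set A))
    (h : A) (hB : h ∈ B) (hs : IsSelfAdjoint h) (h0 : h ≠ 0) :
    ∃ f g k : A, f ∈ B ∧ g ∈ B ∧ g ≠ 0 ∧ IsSelfAdjoint g ∧ f * g = g ∧ g * f = g ∧
      f = h * k ∧ f = k * h ∧ ∀ x : A, ‖x - f * x - x * f + f * x * f‖ ≤ ‖x‖ := by
  have hpos : 0 < ‖h‖ := norm_pos_iff.mpr h0
  set δ : ℝ := ‖h‖ / 2 with hδ
  have hδ0 : 0 < δ := by positivity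
  have hm : ∀ t : ℝ, 0 < max (δ ^ 2) (t ^ 2) := fun t => lt_max_of_lt_left (by positivity)
  let K : ℝ → ℝ := fun t => t / max (δ ^ 2) (t ^ 2)
  let F : ℝ → ℝ := fun t => t * K t
  let G : ℝ → ℝ := fun t => max 0 (t ^ 2 - δ ^ 2)
  have hK : Continuous K := by
    refine Continuous.div (by fun_prop) (by fun_prop) fun t => (hm t).ne'
  have hF : Continuous F := by fun_prop
  have hG : Continuous G := by fun_prop
  have K0 : K 0 = 0 := by simp [K]
  have F0 : F 0 = 0 := by simp [F]
  have G0 : G 0 = 0 := by simp [G]; positivity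
  have hFG : ∀ t, F t * G t = G t := by
    intro t
    rcases le_total (t ^ 2) (δ ^ 2) with ht | ht
    · have : G t = 0 := by simp only [G]; exact max_eq_left (by linarith)
      simp [this]
    · have h2 : 0 < t ^ 2 := lt_of_lt_of_le (by positivity) ht
      have : F t = 1 := by
        simp only [F, K]
        rw [max_eq_right ht]
        have : t ≠ 0 := by rintro rfl; simp at h2
        field_simp
      simp [this]
  have hF1 : ∀ t, ‖1 - F t‖ ≤ 1 := by
    intro t
    have e : F t = t ^ 2 / max (δ ^ 2) (t ^ 2) := by simp only [F, K]; ring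
    have h1 : F t ≤ 1 := by
      rw [e, div_le_one (hm t)]; exact le_max_right _ _
    have h2 : 0 ≤ F t := by rw [e]; have := hm t; positivity
    rw [Real.norm_eq_abs, abs_le]; constructor <;> linarith
  have hmem : ∀ φ : ℝ → ℝ, cfcₙ φ h ∈ B := fun φ => cfcₙ_mem (𝕜' := ℂ) (hs := hBclosed) φ hB
  refine ⟨cfcₙ F h, cfcₙ G h, cfcₙ K h, hmem F, hmem G, ?_, cfcₙ_predicate G h, ?_, ?_, ?_, ?_, ?_⟩
  · intro hz
    have : ‖h‖ ≤ δ := by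
      rw [← cfcₙ_id' ℝ h]
      refine norm_cfcₙ_le fun x hx => ?_
      have := norm_apply_le_norm_cfcₙ G h hx hG.continuousOn G0 hs
      rw [hz, norm_zero, norm_le_zero_iff] at this
      have h3 : x ^ 2 - δ ^ 2 ≤ 0 := by rw [← this]; exact le_max_right _ _
      rw [Real.norm_eq_abs]
      exact abs_le_of_sq_le_sq (by linarith) hδ0.le
    linarith
  · rw [← cfcₙ_mul F G h hF.continuousOn F0 hG.continuousOn G0]
    exact cfcₙ_congr fun t _ => hFG t
  · rw [← cfcₙ_mul G F h hG.continuousOn G0 hF.continuousOn F0]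
    exact cfcₙ_congr fun t _ => by simpa [mul_comm] using hFG t
  · conv_rhs => rw [← cfcₙ_id' ℝ h]
    rw [cfcₙ_id' ℝ h]
    nth_rewrite 2 [← cfcₙ_id' ℝ h]
    rw [← cfcₙ_mul (fun t => t) K h continuousOn_id rfl hK.continuousOn K0]
  · nth_rewrite 3 [← cfcₙ_id' ℝ h]
    rw [← cfcₙ_mul K (fun t => t) h hK.continuousOn K0 continuousOn_id rfl]
    exact cfcₙ_congr fun t _ => mul_comm _ _
  · intro x
    have hs' : IsSelfAdjoint (h : Unitization ℂ A) := isSelfAdjoint_inr.mpr hs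
    have he : (1 : Unitization ℂ A) - (cfcₙ F h : A) = cfc (fun t => 1 - F t) (h : Unitization ℂ A) := by
      rw [real_cfcₙ_eq_cfc_inr h F F0, cfc_sub (fun _ => 1) F (h : Unitization ℂ A)
        continuousOn_const hF.continuousOn, cfc_const_one ℝ (h : Unitization ℂ A)]
    have hn : ‖(1 : Unitization ℂ A) - (cfcₙ F h : A)‖ ≤ 1 := by
      rw [he]; exact norm_cfc_le zero_le_one fun t _ => hF1 t
    generalize cfcₙ F h = f at hn
    have e : ((x - f * x - x * f + f * x * f : A) : Unitization ℂ A)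
        = (1 - (f : Unitization ℂ A)) * x * (1 - (f : Unitization ℂ A)) := by
      simp only [inr_sub, inr_add, inr_mul]; noncomm_ring
    rw [← norm_inr (𝕜 := ℂ) (x - _ - _ + _), e, ← norm_inr (𝕜 := ℂ) x]
    calc _ ≤ ‖1 - (f : Unitization ℂ A)‖ * ‖(x : Unitization ℂ A)‖ * ‖1 - (f : Unitization ℂ A)‖ :=
          norm_mul₃_le
      _ ≤ 1 * ‖(x : Unitization ℂ A)‖ * 1 := by gcongr
      _ = _ := by ring

theorem aux_orth {A : Type*} [NonUnitalCStarAlgebra A] (d g : A) (hg : IsSelfAdjoint g)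
    (h1 : d * g = 0) (h2 : g * d = 0) : ‖d + g‖ ≤ max ‖d‖ ‖g‖ := by
  have h1' : g * star d = 0 := by simpa [hg.star_eq] using congrArg star h1
  have h2' : star d * g = 0 := by simpa [hg.star_eq] using congrArg star h2
  have e : star (d + g) * (d + g) = star d * d + g * g := by
    rw [star_add, hg.star_eq, add_mul, mul_add, mul_add, h2', h2]; simp
  have hgg : ‖g * g‖ = ‖g‖ * ‖g‖ := by
    conv_lhs => rw [← hg.star_eq]
    rw [hg.star_eq, ← CStarRing.norm_star_mul_self, hg.star_eq]
  have := (IsSelfAdjoint.star_mul_self d).norm_add_eq_max (b := g * g)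
    (by simp [IsSelfAdjoint, hg.star_eq]) (by rw [mul_assoc, ← mul_assoc d, h1]; simp)
  rw [← e, CStarRing.norm_star_mul_self, CStarRing.norm_star_mul_self, hgg] at this
  refine abs_le_of_sq_le_sq' (a := ‖d + g‖) ?_ (by positivity) |>.2
  rw [sq, this]
  refine max_le ?_ ?_
  · rw [sq]; gcongr <;> exact le_max_left _ _
  · rw [sq]; gcongr <;> exact le_max_right _ _

theorem aux_kill {A : Type*} [NonUnitalCStarAlgebra A]
    (B : NonUnitalStarSubalgebra ℂ A) (hBclosed : IsClosed (B : Set A))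
    (hCheb : ∀ x : A, ∃! v : A, v ∈ B ∧ ‖x - v‖ = Metric.infDist x (B : Set A))
    (h : A) (hB : h ∈ B) (hs : IsSelfAdjoint h) (h0 : h ≠ 0)
    (z : A) (hz : h * z = 0) (hz' : z * h = 0) : z ∈ B := by
  obtain ⟨f, g, k, hfB, hgB, hg0, hgs, hfg, hgf, hk, hk', hc⟩ := aux_exists_s9 B hBclosed h hB hs h0
  have fz : f * z = 0 := by rw [hk', mul_assoc, hz, mul_zero]
  have zf : z * f = 0 := by rw [hk, ← mul_assoc, hz', zero_mul]
  have zg : z * g = 0 := by rw [← hfg, ← mul_assoc, zf, zero_mul]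
  have gz : g * z = 0 := by rw [← hgf, mul_assoc, fz, mul_zero]
  obtain ⟨v, ⟨hvB, hv⟩, huniq⟩ := hCheb z
  have key : ∀ w ∈ B, ‖z - w‖ ≤ ‖z - v‖ → w = v := fun w hw hle =>
    huniq w ⟨hw, le_antisymm (hle.trans hv.le)
      (by rw [← dist_eq_norm]; exact Metric.infDist_le_dist_of_mem hw)⟩
  have hv' : v - f * v - v * f + f * v * f = v := by
    apply key
    · exact add_mem (sub_mem (sub_mem hvB (mul_mem hfB hvB)) (mul_mem hvB hfB))
        (mul_mem (mul_mem hfB hvB) hfB)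
    · have := hc (z - v)
      convert this using 2
      simp only [mul_sub, sub_mul, fz, zf]
      simp; abel
  have vg : v * g = 0 := by
    rw [← hv']
    simp only [add_mul, sub_mul, mul_assoc, hfg]; simp
  have gv : g * v = 0 := by
    rw [← hv']
    simp only [mul_add, mul_sub, ← mul_assoc, hgf]; simp
  by_contra hzB
  have hd : 0 < ‖z - v‖ := by
    rw [norm_pos_iff, sub_ne_zero]; rintro rfl; exact hzB hvB
  have hgp : 0 < ‖g‖ := norm_pos_iff.mpr hg0
  set t : ℝ := ‖z - v‖ / ‖g‖
  have ht : 0 < t := by positivity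
  have hw : v - (t : ℂ) • g = v := by
    apply key
    · exact sub_mem hvB (SMulMemClass.smul_mem _ hgB)
    · have := aux_orth (z - v) ((t : ℂ) • g) (by
        rw [IsSelfAdjoint, star_smul, hgs.star_eq]; simp)
        (by rw [mul_smul_comm, sub_mul, zg, vg]; simp)
        (by rw [smul_mul_assoc, mul_sub, gz, gv]; simp)
      have e : ‖(t : ℂ) • g‖ = ‖z - v‖ := by
        rw [norm_smul, Complex.norm_real, Real.norm_of_nonneg ht.le]
        simp only [t]; field_simp
      rw [e, max_self] at this
      convert this using 2
      abel
  rw [sub_eq_self, smul_eq_zero] at hw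
  rcases hw with hw | hw
  · exact ht.ne' (by exact_mod_cast hw)
  · exact hg0 hw

theorem aux_main_s9 {A : Type*} [NonUnitalCStarAlgebra A]
    (B : NonUnitalStarSubalgebra ℂ A) (hBclosed : IsClosed (B : Set A))
    (hCheb : ∀ x : A, ∃! v : A, v ∈ B ∧ ‖x - v‖ = Metric.infDist x (B : Set A))
    (a b c : A) (ha : a ∈ B) (hb : b ∈ B) (hc : c ∈ B)
    (ha0 : a ≠ 0) (hb0 : b ≠ 0) (hc0 : c ≠ 0)
    (hab : a * star b = 0) (hac : a * star c = 0) (hbc : b * star c = 0) :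
    B = ⊤ := by
  have step : ∀ h ∈ B, h ≠ 0 → ∃ f k : A, f = star h * h * k ∧ f = k * (star h * h) ∧
      ∀ x : A, x - f * x - x * f + f * x * f ∈ B := by
    intro h hB h0
    obtain ⟨f, g, k, hfB, hgB, hg0, hgs, hfg, hgf, hk, hk', -⟩ :=
      aux_exists_s9 B hBclosed (star h * h) (mul_mem (star_mem hB) hB) (.star_mul_self h)
        (by simpa [CStarRing.star_mul_self_eq_zero_iff] using h0)
    refine ⟨f, k, hk, hk', fun x => ?_⟩
    apply aux_kill B hBclosed hCheb g hgB hgs hg0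
    · simp only [mul_add, mul_sub, ← mul_assoc, hgf]; simp
    · simp only [add_mul, sub_mul, mul_assoc, hfg]; simp
  have orth : ∀ a b k l : A, a * star b = 0 → k * (star a * a) * (star b * b * l) = 0 := by
    intro a b k l h
    have : k * (star a * a) * (star b * b * l) = k * star a * (a * star b) * b * l := by
      simp only [mul_assoc]
    rw [this, h]; simp
  have flip : ∀ a b : A, a * star b = 0 → b * star a = 0 := fun a b h => by
    simpa using congrArg star h
  obtain ⟨p, k, hp, hp', hpB⟩ := step a ha ha0
  obtain ⟨q, l, hq, hq', hqB⟩ := step b hb hb0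
  obtain ⟨r, m, hr, hr', hrB⟩ := step c hc hc0
  have pq : p * q = 0 := by rw [hp', hq]; exact orth _ _ _ _ hab
  have qp : q * p = 0 := by rw [hp, hq']; exact orth _ _ _ _ (flip _ _ hab)
  have pr : p * r = 0 := by rw [hp', hr]; exact orth _ _ _ _ hac
  have rp : r * p = 0 := by rw [hp, hr']; exact orth _ _ _ _ (flip _ _ hac)
  have qr : q * r = 0 := by rw [hq', hr]; exact orth _ _ _ _ hbc
  have rq : r * q = 0 := by rw [hq, hr']; exact orth _ _ _ _ (flip _ _ hbc)
  have red : ∀ f : A, (∀ x : A, x - f * x - x * f + f * x * f ∈ B) →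
      ∀ x, f * x + x * f - f * x * f ∈ B → x ∈ B := by
    intro f hf x hx
    have := add_mem (hf x) hx
    convert this using 1
    abel
  rw [eq_top_iff]
  intro x _
  apply red p hpB
  apply red q hqB
  have e1 : q * (p * x + x * p - p * x * p) + (p * x + x * p - p * x * p) * q
      - q * (p * x + x * p - p * x * p) * q = q * x * p + p * x * q := by
    simp only [mul_add, mul_sub, add_mul, sub_mul, ← mul_assoc, qp]
    simp only [mul_assoc, pq]; simp
  rw [e1]
  apply red r hrB
  have e2 : r * (q * x * p + p * x * q) + (q * x * p + p * x * q) * r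
      - r * (q * x * p + p * x * q) * r = 0 := by
    simp only [mul_add, add_mul, ← mul_assoc, rq, rp]
    simp only [mul_assoc, pr, qr]; simp
  rw [e2]
  exact zero_mem B

/-- Let `A` be a C*-algebra and `B` a norm-closed *-subalgebra of `A`
which is a Chebyshev subspace of `A`. If there exist three nonzero mutually
orthogonal elements `a, b, c ∈ B`, then `B = A`. -/
theorem cebysev_subalgebra_rank_three_eq
    {A : Type*} [NonUnitalNormedRing A] [StarRing A] [CStarRing A]
    [NormedSpace ℂ A] [IsScalarTower ℂ A A] [SMulCommClass ℂ A A]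
    [StarModule ℂ A] [CompleteSpace A]
    (B : NonUnitalStarSubalgebra ℂ A) (hBclosed : IsClosed (B : Set A))
    (hCheb : ∀ x : A, ∃! v : A, v ∈ B ∧ ‖x - v‖ = Metric.infDist x (B : Set A))
    (a b c : A) (ha : a ∈ B) (hb : b ∈ B) (hc : c ∈ B)
    (ha0 : a ≠ 0) (hb0 : b ≠ 0) (hc0 : c ≠ 0)
    (hab : a * star b = 0 ∧ star b * a = 0)
    (hac : a * star c = 0 ∧ star c * a = 0)
    (hbc : b * star c = 0 ∧ star c * b = 0) :
    B = ⊤ := by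
  letI : NonUnitalCStarAlgebra A := {}
  exact aux_main_s9 B hBclosed hCheb a b c ha hb hc ha0 hb0 hc0 hab.1 hac.1 hbc.1
end
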